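/- For every finite abelian 2-subgroup H of SL_3(ℤ), the centralizer C(H) of H in SL_3(ℤ) is rationally acyclic: the group cohomology of C(H) with trivial rational coefficients satisfies H⁰(C(H); ℚ) = ℚ and Hⁱ(C(H); ℚ) = 0 for all i > 0. -/

import Mathlib

open CategoryTheory


namespace SolA

/-- Abstract combinatorial data of a collapsible cell structure. -/
structure CellData (X : Type) [DecidableEq X] where
  cell : Finset X → Prop
  top : Finset X → Finset X
  D : Finset X → Finset X
  rank : Finset X → ℕ
  nb : Finset X → Finset X
  s0 : Finset X
  nb_iff : ∀ S w, cell S → (w ∈ nb S ↔ w ∉ S ∧ cell (insert w S))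
  sub_top : ∀ S, cell S → S ⊆ top S
  diff_top : ∀ S, cell S → top S \ S ⊆ D (top S)
  D_sub : ∀ S, cell S → D (top S) ⊆ top S
  face : ∀ S F, cell S → F ⊆ D (top S) → cell (top S \ F) ∧ top (top S \ F) = top S
  rank_lt : ∀ S w, cell S → cell (insert w S) → w ∉ top S →
    rank (top (insert w S)) < rank (top S)
  D_empty : ∀ S, cell S → D (top S) = ∅ → top S = s0
  nb_empty : ∀ S, cell S → D (top S) = ∅ → nb S = ∅
  interval : ∀ S S' S'', S ⊆ S' → S' ⊆ S'' → cell S → cell S'' → cell S'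

open Equiv Finset

variable {X : Type} [DecidableEq X] (C : CellData X)

namespace CellData

/-- alternating chains -/
def U (j : ℕ) : Submodule ℚ (List X → ℚ) where
  carrier := {φ | (∀ l, φ l ≠ 0 → l.Nodup ∧ C.cell l.toFinset ∧ l.length = j) ∧
    ∀ l a b, a ≠ b → a ∈ l → b ∈ l → φ (l.map (swap a b)) = - φ l}
  add_mem' := by
    rintro φ ψ ⟨h1, h2⟩ ⟨h3, h4⟩
    refine ⟨fun l hl => ?_, fun l a b hab ha hb => ?_⟩
    · by_cases h : φ l = 0
      · apply h3; intro h'; apply hl; simp [h, h']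
      · exact h1 l h
    · simp [h2 l a b hab ha hb, h4 l a b hab ha hb]; ring
  zero_mem' := by
    refine ⟨fun l hl => absurd rfl hl, fun l a b hab ha hb => by simp⟩
  smul_mem' := by
    rintro c φ ⟨h1, h2⟩
    refine ⟨fun l hl => ?_, fun l a b hab ha hb => ?_⟩
    · apply h1; intro h'; apply hl; simp [h']
    · simp [h2 l a b hab ha hb]

open Classical in
/-- differential -/
noncomputable def d : (List X → ℚ) →ₗ[ℚ] (List X → ℚ) where
  toFun φ l := if C.cell l.toFinset then ∑ w ∈ C.nb l.toFinset, φ (w :: l) else 0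
  map_add' φ ψ := by
    ext l; dsimp; split_ifs <;> simp [Finset.sum_add_distrib]
  map_smul' c φ := by
    ext l; dsimp; split_ifs <;> simp [Finset.mul_sum]

theorem d_cell (φ : List X → ℚ) {l : List X} (h : C.cell l.toFinset) :
    C.d φ l = ∑ w ∈ C.nb l.toFinset, φ (w :: l) := by
  simp [d, h]

theorem d_not (φ : List X → ℚ) {l : List X} (h : ¬ C.cell l.toFinset) :
    C.d φ l = 0 := by
  simp [d, h]

theorem toFinset_map_swap {l : List X} {a b : X} (ha : a ∈ l) (hb : b ∈ l) :
    (l.map (swap a b)).toFinset = l.toFinset := by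
  ext x
  simp only [List.mem_toFinset, List.mem_map]
  constructor
  · rintro ⟨y, hy, rfl⟩
    rw [swap_apply_def]; split_ifs <;> assumption
  · intro hx
    refine ⟨swap a b x, ?_, by simp⟩
    rw [swap_apply_def]; split_ifs <;> assumption

theorem map_swap_not {l : List X} {a b : X} (ha : a ∉ l) (hb : b ∉ l) :
    l.map (swap a b) = l := by
  conv_rhs => rw [← List.map_id l]
  apply List.map_congr_left
  intro x hx
  simp
  apply swap_apply_of_ne_of_ne <;> rintro rfl <;> contradiction

theorem map_swap_swap {l : List X} {a b : X}  :
    (l.map (swap a b)).map (swap a b) = l := by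
  simp [List.map_map, Function.comp_def]

theorem d_mem {j : ℕ} {φ : List X → ℚ} (h : φ ∈ C.U (j+1)) : C.d φ ∈ C.U j := by
  obtain ⟨h1, h2⟩ := h
  refine ⟨fun l hl => ?_, fun l a b hab ha hb => ?_⟩
  · by_cases hc : C.cell l.toFinset
    · rw [d_cell _ _ hc] at hl
      obtain ⟨w, hw, h⟩ := Finset.exists_ne_zero_of_sum_ne_zero hl
      have := h1 _ h
      refine ⟨?_, hc, ?_⟩
      · exact (List.nodup_cons.1 this.1).2
      · simpa using this.2.2
    · exact absurd (d_not C φ hc) hl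
  · by_cases hc : C.cell l.toFinset
    · have hs := toFinset_map_swap ha hb
      rw [d_cell _ _ hc, d_cell _ _ (by rw [hs]; exact hc), hs, ← Finset.sum_neg_distrib]
      apply Finset.sum_congr rfl
      intro w hw
      have hw' := ((C.nb_iff _ _ hc).1 hw).1
      rw [← h2 (w :: l) a b hab (by simp [ha]) (by simp [hb])]
      congr 1
      simp only [List.map_cons]
      rw [swap_apply_of_ne_of_ne]
      · rintro rfl; simp [ha] at hw'
      · rintro rfl; simp [hb] at hw'
    · rw [d_not _ _ hc, d_not, neg_zero]
      rw [toFinset_map_swap ha hb]; exact hc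

theorem d_d {j : ℕ} {φ : List X → ℚ} (h : φ ∈ C.U j) : C.d (C.d φ) = 0 := by
  obtain ⟨h1, h2⟩ := h
  ext l
  by_cases hc : C.cell l.toFinset
  swap
  · simp [d_not C _ hc]
  rw [d_cell _ _ hc]
  have : ∀ w ∈ C.nb l.toFinset, C.d φ (w :: l) =
      ∑ w' ∈ C.nb (insert w l.toFinset), φ (w' :: w :: l) := by
    intro w hw
    rw [d_cell, List.toFinset_cons]
    rw [List.toFinset_cons]
    exact ((C.nb_iff _ _ hc).1 hw).2
  rw [Finset.sum_congr rfl this, Finset.sum_sigma']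
  simp only [Pi.zero_apply]
  have key : ∀ a ∈ (C.nb l.toFinset).sigma (fun w => C.nb (insert w l.toFinset)),
      a.1 ∉ l ∧ a.2 ∉ l ∧ a.1 ≠ a.2 ∧ C.cell (insert a.1 l.toFinset) ∧ C.cell (insert a.2 l.toFinset)
      ∧ C.cell (insert a.2 (insert a.1 l.toFinset)) := by
    rintro ⟨a, b⟩ hab
    simp only [Finset.mem_sigma] at hab
    obtain ⟨h3, h4⟩ := hab
    rw [C.nb_iff _ _ hc] at h3
    rw [C.nb_iff _ _ h3.2] at h4
    obtain ⟨h3, h5⟩ := h3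
    obtain ⟨h4, h6⟩ := h4
    simp only [Finset.mem_insert, List.mem_toFinset, not_or] at h3 h4 ⊢
    refine ⟨h3, h4.2, fun h => h4.1 h.symm, h5, ?_, h6⟩
    refine C.interval l.toFinset _ _ ?_ ?_ hc h6
    · exact Finset.subset_insert _ _
    · exact Finset.insert_subset_insert _ (Finset.subset_insert _ _)
  refine Finset.sum_involution (fun a _ => ⟨a.2, a.1⟩) ?_ ?_ ?_ ?_
  · intro a ha
    obtain ⟨k1, k2, k3, k4, k5, k6⟩ := key a ha
    have := h2 (a.2 :: a.1 :: l) a.1 a.2 k3 (by simp) (by simp)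
    simp only [List.map_cons, swap_apply_left, swap_apply_right, map_swap_not k1 k2] at this
    rw [this]; ring
  · intro a ha _ heq
    obtain ⟨k1, k2, k3, k4, k5, k6⟩ := key a ha
    apply k3
    have := congrArg Sigma.fst heq
    exact this.symm
  · intro a ha
    obtain ⟨k1, k2, k3, k4, k5, k6⟩ := key a ha
    simp only [Finset.mem_sigma]
    rw [C.nb_iff _ _ hc, C.nb_iff _ _ k5]
    simp only [Finset.mem_insert, List.mem_toFinset, not_or]
    refine ⟨⟨k2, k5⟩, ⟨k3, k1⟩, ?_⟩
    rw [Finset.insert_comm]; exact k6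
  · intro a ha; rfl

/-- the predicate: the chosen element exists and is `a`. -/
def isd (S : Finset X) (a : X) : Prop :=
  C.cell S ∧ ∃ h : (C.D (C.top S)).Nonempty, h.choose = a

theorem isd_mem {S : Finset X} {a : X} (h : C.isd S a) : a ∈ C.D (C.top S) := by
  obtain ⟨_, h1, rfl⟩ := h
  exact h1.choose_spec

theorem isd_unique {S : Finset X} {a b : X} (h : C.isd S a) (h' : C.isd S b) : a = b := by
  obtain ⟨_, h1, rfl⟩ := h
  obtain ⟨_, h1, rfl⟩ := h'
  rfl

theorem isd_congr {S S' : Finset X} {a : X} (h : C.isd S a) (h' : C.cell S')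
    (h'' : C.top S' = C.top S) : C.isd S' a := by
  obtain ⟨_, h1, rfl⟩ := h
  refine ⟨h', h''.symm ▸ h1, ?_⟩
  congr 1
  rw [h'']

open Classical in
/-- contracting homotopy -/
noncomputable def kap (φ : List X → ℚ) : List X → ℚ
  | [] => 0
  | x :: m => if h : ∃ a, a ∈ x :: m ∧ C.isd (x :: m).toFinset a ∧ (x :: m).Nodup then
      (if x = h.choose then φ m else - φ (m.map (swap x h.choose))) else 0

theorem kap_eq (φ : List X → ℚ) {x : X} {m : List X} (hn : (x :: m).Nodup)
    (h : C.isd (x :: m).toFinset x) :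
    C.kap φ (x :: m) = φ m := by
  have h' : ∃ a, a ∈ x :: m ∧ C.isd (x :: m).toFinset a ∧ (x :: m).Nodup := ⟨x, by simp, h, hn⟩
  have : x = h'.choose := C.isd_unique h h'.choose_spec.2.1
  simp only [kap]
  rw [dif_pos h', if_pos this]

theorem kap_ne (φ : List X → ℚ) {x a : X} {m : List X} (hn : (x :: m).Nodup) (ha : a ∈ x :: m)
    (h : C.isd (x :: m).toFinset a) (hx : x ≠ a) :
    C.kap φ (x :: m) = - φ (m.map (swap x a)) := by
  have h' : ∃ a, a ∈ x :: m ∧ C.isd (x :: m).toFinset a ∧ (x :: m).Nodup := ⟨a, ha, h, hn⟩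
  have : a = h'.choose := C.isd_unique h h'.choose_spec.2.1
  simp only [kap]
  rw [dif_pos h', if_neg (by rw [← this]; exact hx), ← this]

theorem kap_not (φ : List X → ℚ) {l : List X}
    (h : ¬ ∃ a, a ∈ l ∧ C.isd l.toFinset a ∧ l.Nodup) :
    C.kap φ l = 0 := by
  cases l with
  | nil => rfl
  | cons x m =>
  simp only [kap]
  rw [dif_neg h]

theorem perm_aux1 {x b e : X} (h1 : x ≠ b) (h2 : x ≠ e) (h3 : b ≠ e) (y : X) :
    swap b e (swap x b y) = swap x b (swap x e y) := by
  simp only [swap_apply_def]; grind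

theorem perm_aux2 {x b e : X} (h1 : x ≠ b) (h2 : x ≠ e) (h3 : b ≠ e) (y : X) :
    swap x e (swap e b y) = swap x b (swap x e y) := by
  simp only [swap_apply_def]; grind

theorem perm_aux3 {x e a b : X} (h1 : x ≠ a) (h2 : x ≠ b) (h3 : e ≠ a) (h4 : e ≠ b) (y : X) :
    swap x e (swap a b y) = swap a b (swap x e y) := by
  simp only [swap_apply_def]; grind

theorem kap_aux {φ : List X → ℚ}
    (h2 : ∀ l a b, a ≠ b → a ∈ l → b ∈ l → φ (l.map (swap a b)) = - φ l)
    (x e : X) (m : List X) (a b : X) (hab : a ≠ b) (he : e ∈ x :: m)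
    (ha : a ∈ x :: m) (hb : b ∈ x :: m) :
    (if swap a b x = e then φ (m.map (swap a b)) else
      - φ ((m.map (swap a b)).map (swap (swap a b x) e))) =
    - (if x = e then φ m else - φ (m.map (swap x e))) := by
  have aux : ∀ (p : X) (a b : X) , p ≠ e → e ∈ m → b ∈ m.map (swap p e) →
      p ≠ b →
      (∀ y, swap (swap a b x) e (swap a b y) = swap p b (swap p e y)) →
      φ ((m.map (swap a b)).map (swap (swap a b x) e)) = - φ (m.map (swap p e)) := by
    intro p a b hp he hb hpb h
    rw [← h2 _ p b hpb (List.mem_map.2 ⟨e, he, by simp⟩) hb]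
    congr 1
    rw [List.map_map, List.map_map]
    apply List.map_congr_left
    intro y hy
    exact h y
  have mm : ∀ (p c : X), c ≠ p → c ≠ e → c ∈ m → c ∈ m.map (swap p e) := by
    intro p c h1 h2 h3
    exact List.mem_map.2 ⟨c, h3, swap_apply_of_ne_of_ne h1 h2⟩
  by_cases hxe : x = e
  · subst hxe
    rw [if_pos rfl]
    by_cases hxa : x = a
    · subst hxa
      rw [swap_apply_left, if_neg (Ne.symm hab), swap_comm b x, map_swap_swap]
    by_cases hxb : x = b
    · subst hxb
      rw [swap_apply_right, if_neg hab, map_swap_swap]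
    rw [swap_apply_of_ne_of_ne hxa hxb, if_pos rfl]
    apply h2 _ _ _ hab
    · simpa [Ne.symm hxa] using ha
    · simpa [Ne.symm hxb] using hb
  · have hem : e ∈ m := by simpa [Ne.symm hxe] using he
    rw [if_neg hxe, neg_neg]
    by_cases hxa : x = a
    · subst hxa
      have hbm : b ∈ m := by simpa [Ne.symm hab] using hb
      rw [swap_apply_left]
      split_ifs with hbe
      · rw [hbe]
      · have := aux x x b hxe hem (mm x b (Ne.symm hab) hbe hbm) hab (by
          intro y; rw [swap_apply_left]; exact perm_aux1 hab hxe hbe y)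
        rw [swap_apply_left] at this
        rw [this, neg_neg]
    by_cases hxb : x = b
    · subst hxb
      have hbm : a ∈ m := by simpa [hab] using ha
      rw [swap_apply_right]
      split_ifs with hbe
      · rw [hbe, swap_comm]
      · have := aux x x a hxe hem (mm x a hab hbe hbm) (Ne.symm hab) (by
          intro y; rw [swap_apply_left]; exact perm_aux1 (Ne.symm hab) hxe hbe y)
        rw [swap_apply_left] at this
        rw [swap_comm a x, this, neg_neg]
    have ham : a ∈ m := by simpa [Ne.symm hxa] using ha
    have hbm : b ∈ m := by simpa [Ne.symm hxb] using hb
    rw [swap_apply_of_ne_of_ne hxa hxb, if_neg hxe]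
    by_cases hea : e = a
    · subst hea
      have := aux x e b hxe hem (mm x b (Ne.symm hxb) (Ne.symm hab) hbm) hxb (by
          intro y; rw [swap_apply_of_ne_of_ne hxa hxb]; exact perm_aux2 hxb hxe (Ne.symm hab) y)
      rw [swap_apply_of_ne_of_ne hxa hxb] at this
      rw [this, neg_neg]
    by_cases heb : e = b
    · subst heb
      have := aux x e a hxe hem (mm x a (Ne.symm hxa) (hab) ham) hxa (by
          intro y; rw [swap_apply_of_ne_of_ne hxb hxa]; exact perm_aux2 hxa hxe hab y)
      rw [swap_apply_of_ne_of_ne hxb hxa] at this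
      rw [swap_comm a e, this, neg_neg]
    rw [← neg_eq_iff_eq_neg.2 (h2 (m.map (swap x e)) a b hab
      (mm x a (Ne.symm hxa) (Ne.symm hea) ham) (mm x b (Ne.symm hxb) (Ne.symm heb) hbm))]
    congr 2
    rw [List.map_map, List.map_map]
    apply List.map_congr_left
    intro y hy
    exact perm_aux3 hxa hxb hea heb y

theorem kap_if (φ : List X → ℚ) {x a : X} {m : List X} (hn : (x :: m).Nodup) (ha : a ∈ x :: m)
    (h : C.isd (x :: m).toFinset a) :
    C.kap φ (x :: m) = if x = a then φ m else - φ (m.map (swap x a)) := by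
  split_ifs with hx
  · subst hx; exact C.kap_eq φ hn h
  · exact C.kap_ne φ hn ha h hx

theorem kap_alt {φ : List X → ℚ}
    (h2 : ∀ l a b, a ≠ b → a ∈ l → b ∈ l → φ (l.map (swap a b)) = - φ l)
    (l : List X) (a b : X) (hab : a ≠ b) (ha : a ∈ l) (hb : b ∈ l) :
    C.kap φ (l.map (swap a b)) = - C.kap φ l := by
  have hs := toFinset_map_swap ha hb
  by_cases h : ∃ e, e ∈ l ∧ C.isd l.toFinset e ∧ l.Nodup
  swap
  · rw [kap_not _ _ h, kap_not]
    · simp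
    · rintro ⟨e, he, h', hn⟩
      rw [hs] at h'
      refine h ⟨e, ?_, h', List.Nodup.of_map _ hn⟩
      rw [← List.mem_toFinset, ← hs, List.mem_toFinset]; exact he
  obtain ⟨e, he, hd, hn⟩ := h
  cases l with
  | nil => simp at ha
  | cons x m =>
  have he' : e ∈ (x :: m).map (swap a b) := by
    rw [← List.mem_toFinset, hs, List.mem_toFinset]; exact he
  have hd' : C.isd ((x :: m).map (swap a b)).toFinset e := by rw [hs]; exact hd
  have hn' := List.Nodup.map (swap a b).injective hn
  rw [C.kap_if φ hn he hd, ← kap_aux h2 x e m a b hab he ha hb]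
  rw [List.map_cons] at he' hd' hn' ⊢
  exact C.kap_if φ hn' he' hd'

theorem isd_erase {S : Finset X} {a : X} (h : C.isd S a) (ha : a ∈ S) :
    C.cell (S.erase a) ∧ C.top (S.erase a) = C.top S := by
  have h1 := C.sub_top S h.1
  have h2 := C.diff_top S h.1
  have h3 := C.face S (insert a (C.top S \ S)) h.1
    (Finset.insert_subset (C.isd_mem h) h2)
  have : C.top S \ insert a (C.top S \ S) = S.erase a := by
    ext x; simp only [Finset.mem_sdiff, Finset.mem_insert, Finset.mem_erase]
    have := @h1 x
    tauto
  rwa [this] at h3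

/-- adding elements of the top gives a cell with the same top -/
theorem top_insert {S : Finset X} {w : X} (h : C.cell S) (hw : w ∈ C.top S) :
    C.cell (insert w S) ∧ C.top (insert w S) = C.top S := by
  have h1 := C.sub_top S h
  have h2 := C.diff_top S h
  have h3 := C.face S (C.top S \ insert w S) h
    (fun x hx => h2 (by simp at hx ⊢; tauto))
  have : C.top S \ (C.top S \ insert w S) = insert w S := by
    ext x; simp only [Finset.mem_sdiff, Finset.mem_insert]
    have := @h1 x
    constructor
    · tauto
    · rintro (rfl | h)
      · tauto
      · tauto
  rwa [this] at h3

theorem toFinset_map_swap' {l : List X} {a b : X} (hn : (a :: l).Nodup) (hb : b ∈ l) :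
    (l.map (swap a b)).toFinset = (a :: l).toFinset.erase b := by
  rw [List.nodup_cons] at hn
  have hab : a ≠ b := by rintro rfl; exact hn.1 hb
  ext x
  simp only [List.mem_toFinset, List.mem_map, Finset.mem_erase, List.mem_cons]
  constructor
  · rintro ⟨y, hy, rfl⟩
    have : y ≠ a := by rintro rfl; exact hn.1 hy
    rw [swap_apply_def]; split_ifs <;> simp_all
  · rintro ⟨h1, rfl | h3⟩
    · exact ⟨b, hb, by simp⟩
    · exact ⟨x, h3, swap_apply_of_ne_of_ne (by rintro rfl; exact hn.1 h3) h1⟩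

theorem kap_supp {φ : List X → ℚ} {l : List X} (hl : C.kap φ l ≠ 0) :
    ∃ e m, e ∈ l ∧ C.isd l.toFinset e ∧ l.Nodup ∧ m.toFinset = l.toFinset.erase e ∧
      m.length + 1 = l.length ∧ φ m ≠ 0 := by
  have : ∃ e, e ∈ l ∧ C.isd l.toFinset e ∧ l.Nodup := by
    by_contra h; exact hl (C.kap_not φ h)
  obtain ⟨e, he, hd, hn⟩ := this
  cases l with
  | nil => simp at he
  | cons x m =>
  rw [C.kap_if φ hn he hd] at hl
  have hn' := List.nodup_cons.1 hn
  split_ifs at hl with hx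
  · subst hx
    refine ⟨x, m, he, hd, hn, ?_, by simp, hl⟩
    rw [List.toFinset_cons, Finset.erase_insert]
    simpa using hn'.1
  · refine ⟨e, m.map (swap x e), he, hd, hn, ?_, by simp, by simpa using hl⟩
    apply toFinset_map_swap' hn
    simpa [Ne.symm hx] using he

theorem kap_mem {j : ℕ} {φ : List X → ℚ} (h : φ ∈ C.U j) : C.kap φ ∈ C.U (j + 1) := by
  obtain ⟨h1, h2⟩ := h
  refine ⟨fun l hl => ?_, C.kap_alt h2⟩
  obtain ⟨e, m, he, hd, hn, hs, hlen, hφ⟩ := C.kap_supp hl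
  refine ⟨hn, hd.1, ?_⟩
  rw [← hlen, (h1 m hφ).2.2]

/-- vanishing below a given rank -/
def Van (φ : List X → ℚ) (n : ℕ) : Prop :=
  ∀ l : List X, C.cell l.toFinset → C.rank (C.top l.toFinset) < n → φ l = 0

theorem kap_zero {φ : List X → ℚ} {l : List X} {w : X} (hc : C.cell l.toFinset)
    (hw : w ∉ C.top l.toFinset)
    (hv : C.Van φ (C.rank (C.top l.toFinset))) : C.kap φ (w :: l) = 0 := by
  by_contra h
  obtain ⟨e, m, he, hd, hn, hs, hlen, hφ⟩ := C.kap_supp h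
  have h1 := C.isd_erase hd (by simpa using he)
  rw [List.toFinset_cons] at hd h1 hs
  by_cases hew : e = w
  · subst hew
    have hel : e ∉ l.toFinset := by simpa using (List.nodup_cons.1 hn).1
    rw [Finset.erase_insert hel] at h1
    rw [h1.2] at hw
    exact hw (C.sub_top _ hd.1 (by simp))
  · apply hφ
    have h3 := C.rank_lt _ _ hc hd.1 hw
    rw [← hs] at h1
    apply hv
    · exact h1.1
    · rw [h1.2]; exact h3

theorem d_red {φ : List X → ℚ} {l : List X} (hc : C.cell l.toFinset)
    (hv : ∀ w, w ∉ C.top l.toFinset → C.cell (insert w l.toFinset) → φ (w :: l) = 0) :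
    C.d φ l = ∑ w ∈ C.top l.toFinset \ l.toFinset, φ (w :: l) := by
  rw [C.d_cell φ hc]
  symm
  apply Finset.sum_subset
  · intro w hw
    rw [Finset.mem_sdiff] at hw
    rw [C.nb_iff _ _ hc]
    exact ⟨hw.2, (C.top_insert hc hw.1).1⟩
  · intro w hw hw'
    rw [C.nb_iff _ _ hc] at hw
    apply hv
    · intro h; exact hw' (Finset.mem_sdiff.2 ⟨h, hw.1⟩)
    · exact hw.2

theorem key_aux {j : ℕ} {φ : List X → ℚ} (h : φ ∈ C.U j) (l : List X)
    (hc : C.cell l.toFinset) (hn : l.Nodup)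
    (hv : C.Van φ (C.rank (C.top l.toFinset))) (e : X) (he : C.isd l.toFinset e) :
    (∀ m, l = e :: m ∨ e ∉ l → C.d (C.kap φ) l + C.kap (C.d φ) l = φ l) := by
  intro m hm
  rw [C.d_red hc (fun w hw _ => C.kap_zero hc hw hv)]
  have hin : ∀ w ∈ C.top l.toFinset \ l.toFinset, C.isd (w :: l).toFinset e ∧
      (w :: l).Nodup := by
    intro w hw
    rw [Finset.mem_sdiff] at hw
    have := C.top_insert hc hw.1
    rw [← List.toFinset_cons] at this
    refine ⟨C.isd_congr he this.1 this.2, ?_⟩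
    rw [List.nodup_cons]
    refine ⟨by simpa using hw.2, hn⟩
  rcases hm with hm | hm
  · subst hm
    have h1 := C.isd_erase he (by simp)
    have hem := (List.nodup_cons.1 hn).1
    have hset : (e :: m).toFinset.erase e = m.toFinset := by
      rw [List.toFinset_cons, Finset.erase_insert]; simpa using hem
    rw [hset] at h1
    rw [C.kap_eq _ hn he]
    rw [C.d_red h1.1]
    · have h2 : C.top m.toFinset \ m.toFinset =
          insert e (C.top (e :: m).toFinset \ (e :: m).toFinset) := by
        rw [h1.2]
        ext y
        simp only [Finset.mem_sdiff, Finset.mem_insert, List.mem_toFinset, List.mem_cons]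
        have h3 : e ∈ C.top (e :: m).toFinset := C.sub_top _ hc (by simp)
        constructor
        · tauto
        · rintro (rfl | h)
          · exact ⟨h3, hem⟩
          · tauto
      rw [h2, Finset.sum_insert (by simp), add_comm, add_assoc, ← Finset.sum_add_distrib,
        Finset.sum_eq_zero, add_zero]
      intro w hw
      have hwe : w ≠ e := by
        rintro rfl
        simp at hw
      rw [C.kap_ne φ (hin w hw).2 (by simp) (hin w hw).1 hwe]
      have hwm : w ∉ m := by
        simp at hw; tauto
      rw [List.map_cons, swap_apply_right, map_swap_not hwm hem]; ring
    · intro w hw hw'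
      apply hv
      · rw [List.toFinset_cons]; exact hw'
      · rw [List.toFinset_cons, ← h1.2]
        exact C.rank_lt _ _ h1.1 hw' hw
  · have h1 : e ∈ C.top l.toFinset := C.D_sub _ hc (C.isd_mem he)
    rw [C.kap_not (C.d φ), add_zero]
    · rw [Finset.sum_eq_single e]
      · apply C.kap_eq _
        · exact (hin e (by simp [h1, hm])).2
        · exact (hin e (by simp [h1, hm])).1
      · intro w hw hwe
        apply C.kap_not
        rintro ⟨a, h2, h3, h4⟩
        have := C.isd_unique h3 (hin w hw).1
        subst this
        simp at h2
        rcases h2 with h2 | h2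
        · exact hwe h2.symm
        · exact hm h2
      · intro h; exfalso; apply h; simp [h1, hm]
    · rintro ⟨a, h2, h3, h4⟩
      rw [C.isd_unique h3 he] at h2
      exact hm h2

theorem kap_alt_mem {j : ℕ} {φ : List X → ℚ} (h : φ ∈ C.U j) (l : List X) (a b : X)
    (hab : a ≠ b) (ha : a ∈ l) (hb : b ∈ l) : φ (l.map (swap a b)) = - φ l :=
  h.2 l a b hab ha hb

theorem U_congr_d {j : ℕ} {φ : List X → ℚ} (h : φ ∈ C.U j) :
    ∀ l a b, a ≠ b → a ∈ l → b ∈ l → C.d φ (l.map (swap a b)) = - C.d φ l := by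
  cases j with
  | succ j => exact (C.d_mem h).2
  | zero =>
    have : C.d φ = 0 := by
      ext l
      by_cases hc : C.cell l.toFinset
      · rw [C.d_cell φ hc]
        apply Finset.sum_eq_zero
        intro w _
        by_contra hne
        simpa using (h.1 _ hne).2.2
      · exact C.d_not φ hc
    simp [this]

theorem key {j : ℕ} {φ : List X → ℚ} (h : φ ∈ C.U j) (l : List X)
    (hc : C.cell l.toFinset) (hn : l.Nodup)
    (hv : C.Van φ (C.rank (C.top l.toFinset))) (hD : (C.D (C.top l.toFinset)).Nonempty) :
    C.d (C.kap φ) l + C.kap (C.d φ) l = φ l := by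
  obtain ⟨e, he⟩ : ∃ e, C.isd l.toFinset e := ⟨hD.choose, hc, hD, rfl⟩
  by_cases hel : e ∈ l
  swap
  · exact C.key_aux h l hc hn hv e he [] (Or.inr hel)
  cases l with
  | nil => simp at hel
  | cons x m =>
  by_cases hx : x = e
  · subst hx
    exact C.key_aux h _ hc hn hv _ he m (Or.inl rfl)
  have hs : ((x :: m).map (swap x e)).toFinset = (x :: m).toFinset :=
    toFinset_map_swap (by simp) hel
  have := C.key_aux h ((x :: m).map (swap x e)) (by rw [hs]; exact hc)
    (List.Nodup.map (swap x e).injective hn) (by rw [hs]; exact hv) e (by rw [hs]; exact he)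
    (m.map (swap x e)) (Or.inl (by simp))
  rw [C.U_congr_d (C.kap_mem h) _ _ _ hx (by simp) hel,
    C.kap_alt (C.U_congr_d h) _ _ _ hx (by simp) hel,
    h.2 _ _ _ hx (by simp) hel] at this
  linarith

/-- iterates -/
noncomputable def zz (z : List X → ℚ) : ℕ → (List X → ℚ)
  | 0 => z
  | n + 1 => zz z n - C.d (C.kap (zz z n))

theorem kap_zero_fun : C.kap (0 : List X → ℚ) = 0 := by
  ext l
  by_contra h
  obtain ⟨e, m, he, hd, hn, hs, hlen, hφ⟩ := C.kap_supp h
  exact hφ rfl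

/-- vanishing on the minimal top cell -/
def Van0 (z : List X → ℚ) : Prop :=
  ∀ l : List X, C.cell l.toFinset → C.D (C.top l.toFinset) = ∅ → z l = 0

theorem zz_spec {j : ℕ} {z : List X → ℚ} (h : z ∈ C.U j) (hd : C.d z = 0)
    (h0 : C.Van0 z) (n : ℕ) :
    C.zz z n ∈ C.U j ∧ C.d (C.zz z n) = 0 ∧ C.Van0 (C.zz z n) ∧
      C.Van (C.zz z n) n := by
  induction n with
  | zero => exact ⟨h, hd, h0, fun l _ hl => absurd hl (by simp)⟩
  | succ n ih =>
    obtain ⟨i1, i2, i3, i4⟩ := ih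
    have hk := C.kap_mem i1
    have hS0 : C.Van0 (C.d (C.kap (C.zz z n))) := by
      intro l hc hD
      rw [C.d_cell _ hc, C.nb_empty _ hc hD]; simp
    have hstep : ∀ l : List X, C.cell l.toFinset → C.rank (C.top l.toFinset) < n + 1 →
        C.d (C.kap (C.zz z n)) l = C.zz z n l := by
      intro l hc hl
      by_cases hn : l.Nodup
      · rcases (C.D (C.top l.toFinset)).eq_empty_or_nonempty with hD | hD
        · rw [hS0 l hc hD, i3 l hc hD]
        · have := C.key i1 l hc hn (fun l' hl' hr => i4 l' hl' (by omega)) hD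
          rw [i2, kap_zero_fun] at this
          simpa using this
      · have e1 : C.zz z n l = 0 := by
          by_contra hne; exact hn (i1.1 l hne).1
        have e2 : C.d (C.kap (C.zz z n)) l = 0 := by
          by_contra hne; exact hn ((C.d_mem hk).1 l hne).1
        rw [e1, e2]
    refine ⟨?_, ?_, ?_, ?_⟩
    · exact Submodule.sub_mem _ i1 (C.d_mem hk)
    · simp only [zz, map_sub, i2, C.d_d hk, sub_zero]
    · intro l hc hD
      simp only [zz, Pi.sub_apply, i3 l hc hD, hS0 l hc hD, sub_zero]
    · intro l hc hl
      simp only [zz, Pi.sub_apply, hstep l hc hl, sub_self]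

theorem kap_van {φ : List X → ℚ} {n : ℕ} (h : C.Van φ n) {l : List X}
    (hl : C.rank (C.top l.toFinset) < n) : C.kap φ l = 0 := by
  by_contra hne
  obtain ⟨e, m, he, hd, hn, hs, hlen, hφ⟩ := C.kap_supp hne
  have h1 := C.isd_erase hd (by simpa using he)
  rw [← hs] at h1
  exact hφ (h m h1.1 (by rw [h1.2]; exact hl))

theorem exact_aux {j : ℕ} {z : List X → ℚ} (h : z ∈ C.U j) (hd : C.d z = 0)
    (h0 : C.Van0 z) : ∃ ψ ∈ C.U (j + 1), C.d ψ = z := by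
  have hz := C.zz_spec h hd h0
  have hk := fun n => C.kap_mem (hz n).1
  refine ⟨fun l => ∑ n ∈ Finset.range (C.rank (C.top l.toFinset) + 1), C.kap (C.zz z n) l,
    ⟨fun l hl => ?_, fun l a b hab ha hb => ?_⟩, ?_⟩
  · obtain ⟨n, _, hn⟩ := Finset.exists_ne_zero_of_sum_ne_zero hl
    exact (hk n).1 l hn
  · dsimp only
    rw [toFinset_map_swap ha hb, ← Finset.sum_neg_distrib]
    exact Finset.sum_congr rfl (fun n _ => (hk n).2 l a b hab ha hb)
  · have hext : ∀ (l : List X) (N : ℕ), C.rank (C.top l.toFinset) < N →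
        ∑ n ∈ Finset.range (C.rank (C.top l.toFinset) + 1), C.kap (C.zz z n) l =
        ∑ n ∈ Finset.range N, C.kap (C.zz z n) l := by
      intro l N hN
      apply Finset.sum_subset
      · intro n; simp only [Finset.mem_range]; omega
      · intro n _ hn
        apply C.kap_van (hz n).2.2.2
        simp only [Finset.mem_range] at hn; omega
    have htel : ∀ N, ∑ n ∈ Finset.range N, C.d (C.kap (C.zz z n)) = z - C.zz z N := by
      intro N
      induction N with
      | zero => simp [zz]
      | succ N ih => rw [Finset.sum_range_succ, ih]; simp only [zz]; abel
    ext l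
    by_cases hc : C.cell l.toFinset
    swap
    · rw [C.d_not _ hc]
      by_contra hne
      exact hc (h.1 l (Ne.symm hne)).2.1
    rw [C.d_cell _ hc]
    obtain ⟨N, hN⟩ : ∃ N, C.rank (C.top l.toFinset) < N ∧ ∀ w ∈ C.nb l.toFinset,
        C.rank (C.top (w :: l).toFinset) < N := by
      refine ⟨C.rank (C.top l.toFinset) + ∑ w ∈ C.nb l.toFinset,
        C.rank (C.top (w :: l).toFinset) + 1, by omega, fun w hw => ?_⟩
      have := Finset.single_le_sum (f := fun w => C.rank (C.top (w :: l).toFinset))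
        (fun i _ => Nat.zero_le _) hw
      omega
    rw [Finset.sum_congr rfl (fun w hw => hext (w :: l) N (hN.2 w hw)), Finset.sum_comm]
    have := congrFun (htel N) l
    simp only [Finset.sum_apply, Pi.sub_apply, (hz N).2.2.2 l hc hN.1, sub_zero] at this
    rw [← this]
    exact Finset.sum_congr rfl (fun n _ => (C.d_cell _ hc).symm)

theorem van0_of {z : List X → ℚ} (h0 : ∀ l : List X, l.toFinset = C.s0 → z l = 0) :
    C.Van0 z := by
  intro l hc hD
  apply h0
  have hsub := C.diff_top _ hc
  rw [hD, Finset.subset_empty, Finset.sdiff_eq_empty_iff_subset] at hsub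
  rw [← C.D_empty _ hc hD]
  exact Finset.Subset.antisymm (C.sub_top _ hc) hsub

theorem exact_lt {j : ℕ} (hj : j < C.s0.card) {z : List X → ℚ} (h : z ∈ C.U j)
    (hd : C.d z = 0) : ∃ ψ ∈ C.U (j + 1), C.d ψ = z := by
  apply C.exact_aux h hd (C.van0_of _)
  intro l hl
  by_contra hne
  obtain ⟨h1, h2, h3⟩ := h.1 l hne
  rw [← hl, List.toFinset_card_of_nodup h1, h3] at hj
  omega

theorem perm_zero_iff {φ : List X → ℚ}
    (h2 : ∀ l a b, a ≠ b → a ∈ l → b ∈ l → φ (l.map (swap a b)) = - φ l)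
    {l l' : List X} (hp : l.Perm l') :
    ∀ p : List X, (p ++ l).Nodup → (φ (p ++ l) = 0 ↔ φ (p ++ l') = 0) := by
  induction hp with
  | nil => intro p _; rfl
  | cons x _ ih =>
    intro p hp
    have := ih (p ++ [x]) (by simpa using hp)
    simpa using this
  | swap x y l =>
    intro p hp
    have hxy : x ≠ y := by
      rintro rfl
      simp [List.nodup_append] at hp
    have := h2 (p ++ y :: x :: l) x y hxy (by simp) (by simp)
    have hx : x ∉ p ∧ x ∉ l ∧ y ∉ p ∧ y ∉ l := by
      rw [List.nodup_append] at hp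
      obtain ⟨h3, h4, h5⟩ := hp
      simp at h4
      refine ⟨fun h => h5 x h x (by simp) rfl, by tauto, fun h => h5 y h y (by simp) rfl, by tauto⟩
    rw [List.map_append, List.map_cons, List.map_cons, swap_apply_right, swap_apply_left,
      map_swap_not hx.1 hx.2.2.1, map_swap_not hx.2.1 hx.2.2.2] at this
    rw [this, neg_eq_zero]
  | trans h1 h3 ih1 ih2 =>
    intro p hp
    rw [ih1 p hp, ih2 p]
    exact ((List.Perm.append_left p h1).nodup_iff).1 hp

/-- uniqueness of top cycles -/
theorem top_unique {k : ℕ} (hk : ∀ S, C.cell S → S.card ≤ k) {z : List X → ℚ} (h : z ∈ C.U k)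
    (hd : C.d z = 0) (l0 : List X) (hl0 : l0.toFinset = C.s0) (hn0 : l0.Nodup)
    (h0 : z l0 = 0) : z = 0 := by
  obtain ⟨ψ, hψ, rfl⟩ := C.exact_aux h hd (C.van0_of (fun l hl => by
    by_contra hne
    apply hne
    have hp : l0.Perm l := by
      rw [List.perm_ext_iff_of_nodup hn0 (h.1 l hne).1]
      intro a
      rw [← List.mem_toFinset, ← List.mem_toFinset, hl, hl0]
    exact (perm_zero_iff h.2 hp [] (by simpa using hn0)).1 h0))
  have : ψ = 0 := by
    ext l
    by_contra hne
    obtain ⟨h1, h2, h3⟩ := hψ.1 l hne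
    have := hk _ h2
    rw [List.toFinset_card_of_nodup h1, h3] at this
    omega
  rw [this, map_zero]

end CellData
end SolA


namespace SolA
open Finset

/-- Voronoi-type data, which produces `CellData`. -/
structure VorData (X : Type) [DecidableEq X] where
  M : Set (Finset X)
  span : Finset X → Prop
  ph : Finset X → X → ℝ
  lam : Finset X → X → ℝ
  h : Finset X → ℝ
  k : ℕ
  span_mono : ∀ S T, S ⊆ T → span S → span T
  h_eq : ∀ s ∈ M, ∀ s' ∈ M, h s' = ∑ w ∈ s, lam s w * ph s' w
  ph_in : ∀ s ∈ M, ∀ w ∈ s, ph s w = 2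
  ph_out : ∀ s ∈ M, ∀ s' ∈ M, ∀ w ∈ s', w ∉ s → 2 < ph s w
  lam_ne : ∀ s ∈ M, ∀ w ∈ s, lam s w ≠ 0
  span_pos : ∀ s ∈ M, span (s.filter (fun w => 0 < lam s w))
  flip : ∀ s ∈ M, ∀ f ∈ s, span (s.erase f) → ∃ s' ∈ M, s.erase f ⊆ s' ∧ f ∉ s'
  fin_S : ∀ S, span S → {s | s ∈ M ∧ S ⊆ s}.Finite
  fin_h : ∀ c, {s | s ∈ M ∧ h s ≤ c}.Finite
  card : ∀ s ∈ M, s.card = k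
  M_ne : M.Nonempty

namespace VorData

variable {X : Type} [DecidableEq X] (V : VorData X)

/-- cells -/
def cell (S : Finset X) : Prop := V.span S ∧ ∃ s ∈ V.M, S ⊆ s

/-- negative directions -/
noncomputable def D (s : Finset X) : Finset X := s.filter (fun w => V.lam s w < 0)

theorem h_diff {s s' : Finset X} (hs : s ∈ V.M) (hs' : s' ∈ V.M) :
    V.h s' - V.h s = ∑ w ∈ s, V.lam s w * (V.ph s' w - 2) := by
  rw [V.h_eq s hs s' hs', V.h_eq s hs s hs, ← Finset.sum_sub_distrib]
  apply Finset.sum_congr rfl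
  intro w hw
  rw [V.ph_in s hs w hw]; ring

theorem ph_ge {s s' : Finset X} (hs : s ∈ V.M) (hs' : s' ∈ V.M) {w : X} (hw : w ∈ s) :
    2 ≤ V.ph s' w := by
  by_cases h : w ∈ s'
  · exact (V.ph_in s' hs' w h).ge
  · exact (V.ph_out s' hs' s hs w hw h).le

theorem h_lt {S s s' : Finset X} (hs : s ∈ V.M) (hs' : s' ∈ V.M)
    (h1 : s \ S ⊆ V.D s) (h2 : S ⊆ s') (hne : s' ≠ s) : V.h s' < V.h s := by
  rw [← sub_neg, V.h_diff hs hs']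
  have hle : ∀ w ∈ s, V.lam s w * (V.ph s' w - 2) ≤ 0 := by
    intro w hw
    by_cases hwS : w ∈ S
    · rw [V.ph_in s' hs' w (h2 hwS)]; simp
    · have := h1 (mem_sdiff.2 ⟨hw, hwS⟩)
      simp only [D, mem_filter] at this
      have h3 := V.ph_ge hs hs' hw
      exact mul_nonpos_of_nonpos_of_nonneg this.2.le (by linarith)
  have hnot : ¬ s ⊆ s' := by
    intro h
    exact hne (Finset.eq_of_subset_of_card_le h (by rw [V.card s hs, V.card s' hs'])).symm
  rw [Finset.not_subset] at hnot
  obtain ⟨w, hw, hw'⟩ := hnot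
  apply Finset.sum_neg' hle
  refine ⟨w, hw, ?_⟩
  have hwS : w ∉ S := fun h => hw' (h2 h)
  have := h1 (mem_sdiff.2 ⟨hw, hwS⟩)
  simp only [D, mem_filter] at this
  exact mul_neg_of_neg_of_pos this.2 (by linarith [V.ph_out s' hs' s hs w hw hw'])

theorem flip_h {s : Finset X} (hs : s ∈ V.M) {f : X} (hf : f ∈ s) (hsp : V.span (s.erase f)) :
    ∃ s' ∈ V.M, s.erase f ⊆ s' ∧ ∃ c > 0, V.h s' = V.h s + V.lam s f * c := by
  obtain ⟨s', hs', h1, h2⟩ := V.flip s hs f hf hsp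
  refine ⟨s', hs', h1, V.ph s' f - 2, by linarith [V.ph_out s' hs' s hs f hf h2], ?_⟩
  have := V.h_diff hs hs'
  rw [Finset.sum_eq_single f] at this
  · linarith
  · intro w hw hwf
    rw [V.ph_in s' hs' w (h1 (mem_erase.2 ⟨hwf, hw⟩))]; simp
  · intro h; exact absurd hf h

theorem exists_top {S : Finset X} (hS : V.cell S) :
    ∃ s ∈ V.M, S ⊆ s ∧ s \ S ⊆ V.D s := by
  obtain ⟨s, ⟨hs, hSs⟩, hmax⟩ := Set.exists_max_image {s | s ∈ V.M ∧ S ⊆ s} V.h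
    (V.fin_S S hS.1) hS.2
  refine ⟨s, hs, hSs, ?_⟩
  intro f hf
  rw [mem_sdiff] at hf
  have hsub : S ⊆ s.erase f := by
    intro w hw
    refine mem_erase.2 ⟨?_, hSs hw⟩
    rintro rfl; exact hf.2 hw
  obtain ⟨s', hs', h1, c, hc, h2⟩ := V.flip_h hs hf.1 (V.span_mono _ _ hsub hS.1)
  have h3 := hmax s' ⟨hs', hsub.trans h1⟩
  simp only [D, mem_filter]
  refine ⟨hf.1, ?_⟩
  have h4 := V.lam_ne s hs f hf.1
  rcases lt_or_gt_of_ne h4 with h5 | h5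
  · exact h5
  · have := mul_pos h5 hc
    linarith

open Classical in
/-- top cell -/
noncomputable def top (S : Finset X) : Finset X :=
  if h : V.cell S then (V.exists_top h).choose else ∅

theorem top_spec {S : Finset X} (hS : V.cell S) :
    V.top S ∈ V.M ∧ S ⊆ V.top S ∧ V.top S \ S ⊆ V.D (V.top S) := by
  rw [top, dif_pos hS]
  exact (V.exists_top hS).choose_spec

theorem top_eq {S s : Finset X} (hS : V.cell S) (hs : s ∈ V.M) (h1 : S ⊆ s)
    (h2 : s \ S ⊆ V.D s) : V.top S = s := by
  obtain ⟨h3, h4, h5⟩ := V.top_spec hS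
  by_contra hne
  have := V.h_lt hs h3 h2 h4 hne
  have := V.h_lt h3 hs h5 h1 (Ne.symm hne)
  linarith

theorem exists_min : ∃ s ∈ V.M, V.D s = ∅ := by
  obtain ⟨s1, hs1⟩ := V.M_ne
  obtain ⟨s, ⟨hs, hle⟩, hmin⟩ := Set.exists_min_image {s | s ∈ V.M ∧ V.h s ≤ V.h s1} V.h
    (V.fin_h _) ⟨s1, hs1, le_rfl⟩
  refine ⟨s, hs, ?_⟩
  by_contra hne
  obtain ⟨f, hf⟩ := Finset.nonempty_iff_ne_empty.2 hne
  simp only [D, mem_filter] at hf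
  obtain ⟨s', hs', h1, c, hc, h2⟩ := V.flip_h hs hf.1 (V.span_mono _ _ (by
    intro w hw
    rw [mem_filter] at hw
    refine mem_erase.2 ⟨?_, hw.1⟩
    rintro rfl
    linarith [hw.2, hf.2]) (V.span_pos s hs))
  have := mul_neg_of_neg_of_pos hf.2 hc
  have := hmin s' ⟨hs', by linarith⟩
  linarith

/-- minimal top cell -/
noncomputable def s0 : Finset X := V.exists_min.choose

theorem s0_mem : V.s0 ∈ V.M := V.exists_min.choose_spec.1

theorem s0_D : V.D V.s0 = ∅ := V.exists_min.choose_spec.2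

theorem D_empty_eq {s : Finset X} (hs : s ∈ V.M) (hD : V.D s = ∅) : s = V.s0 := by
  have key : ∀ s ∈ V.M, ∀ s' ∈ V.M, V.D s = ∅ → s' ≠ s → V.h s < V.h s' := by
    intro s hs s' hs' hD hne
    have hpos : ∀ w ∈ s, 0 < V.lam s w := by
      intro w hw
      rcases lt_or_gt_of_ne (V.lam_ne s hs w hw) with h5 | h5
      · have : w ∈ V.D s := by simp [D, hw, h5]
        simp [hD] at this
      · exact h5
    rw [← sub_pos, V.h_diff hs hs']
    have hnot : ¬ s ⊆ s' := by
      intro h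
      exact hne (Finset.eq_of_subset_of_card_le h (by rw [V.card s hs, V.card s' hs'])).symm
    rw [Finset.not_subset] at hnot
    obtain ⟨w, hw, hw'⟩ := hnot
    apply Finset.sum_pos'
    · intro w hw
      exact mul_nonneg (hpos w hw).le (by linarith [V.ph_ge hs hs' hw])
    · exact ⟨w, hw, mul_pos (hpos w hw) (by linarith [V.ph_out s' hs' s hs w hw hw'])⟩
  by_contra hne
  have h1 := key s hs V.s0 V.s0_mem hD (Ne.symm hne)
  have h2 := key V.s0 V.s0_mem s hs V.s0_D hne
  linarith

theorem face {s F : Finset X} (hs : s ∈ V.M) (hF : F ⊆ V.D s) :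
    V.cell (s \ F) ∧ V.top (s \ F) = s := by
  have hc : V.cell (s \ F) := by
    refine ⟨V.span_mono _ _ ?_ (V.span_pos s hs), s, hs, sdiff_subset⟩
    intro w hw
    rw [mem_filter] at hw
    rw [mem_sdiff]
    refine ⟨hw.1, fun h => ?_⟩
    have := hF h
    simp only [D, mem_filter] at this
    linarith [hw.2, this.2]
  refine ⟨hc, V.top_eq hc hs sdiff_subset ?_⟩
  intro w hw
  simp only [mem_sdiff, not_and, not_not] at hw
  exact hF (hw.2 hw.1)

theorem nb_fin {S : Finset X} (hS : V.cell S) : {w | w ∉ S ∧ V.cell (insert w S)}.Finite := by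
  apply Set.Finite.subset ((V.fin_S S hS.1).biUnion (fun s _ => s.finite_toSet))
  rintro w ⟨hw, _, s, hs, hsub⟩
  simp only [Set.mem_iUnion]
  exact ⟨s, ⟨hs, (subset_insert _ _).trans hsub⟩, hsub (mem_insert_self _ _)⟩

open Classical in
/-- neighbours -/
noncomputable def nb (S : Finset X) : Finset X :=
  if h : V.cell S then (V.nb_fin h).toFinset else ∅

theorem mem_nb {S : Finset X} (w : X) (hS : V.cell S) :
    w ∈ V.nb S ↔ w ∉ S ∧ V.cell (insert w S) := by
  rw [nb, dif_pos hS]; simp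

theorem card_le {S : Finset X} (hS : V.cell S) : S.card ≤ V.k := by
  obtain ⟨_, s, hs, h⟩ := hS
  rw [← V.card s hs]
  exact card_le_card h

/-- the associated cell data -/
noncomputable def toCell : CellData X where
  cell := V.cell
  top := V.top
  D := V.D
  rank s := {s' | s' ∈ V.M ∧ V.h s' < V.h s}.ncard
  nb := V.nb
  s0 := V.s0
  nb_iff S w hS := V.mem_nb w hS
  sub_top S hS := (V.top_spec hS).2.1
  diff_top S hS := (V.top_spec hS).2.2
  D_sub S _ := filter_subset _ _
  face S F hS hF := V.face (V.top_spec hS).1 hF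
  rank_lt S w hS hS' hw := by
    obtain ⟨h1, h2, h3⟩ := V.top_spec hS
    obtain ⟨h4, h5, h6⟩ := V.top_spec hS'
    have hlt : V.h (V.top (insert w S)) < V.h (V.top S) := by
      apply V.h_lt h1 h4 h3 ((subset_insert _ _).trans h5)
      intro h
      rw [← h] at hw
      exact hw (h5 (mem_insert_self _ _))
    apply Set.ncard_lt_ncard
    · refine ⟨fun s hs => ⟨hs.1, hs.2.trans hlt⟩, fun h => ?_⟩
      exact absurd (h ⟨h4, hlt⟩).2 (lt_irrefl _)
    · exact (V.fin_h (V.h (V.top S))).subset (fun s hs => ⟨hs.1, hs.2.le⟩)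
  D_empty S hS hD := V.D_empty_eq (V.top_spec hS).1 hD
  nb_empty S hS hD := by
    obtain ⟨h1, h2, h3⟩ := V.top_spec hS
    rw [hD, subset_empty, sdiff_eq_empty_iff_subset] at h3
    have : S = V.top S := Subset.antisymm h2 h3
    rw [Finset.eq_empty_iff_forall_notMem]
    intro w hw
    rw [V.mem_nb w hS] at hw
    have h4 := V.card_le hw.2
    rw [card_insert_of_notMem hw.1, this, V.card _ h1] at h4
    omega
  interval S S' S'' h1 h2 hS hS'' := by
    obtain ⟨_, s, hs, h⟩ := hS''
    exact ⟨V.span_mono _ _ h1 hS.1, s, hs, h2.trans h⟩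

end VorData
end SolA


namespace SolA
open Finset Matrix

/-- square integer matrices -/
abbrev Mat (n : ℕ) := Matrix (Fin n) (Fin n) ℤ

/-- congruence action -/
def act {n : ℕ} (g : (Mat n)ˣ) : Mat n →ₗ[ℤ] Mat n where
  toFun A := g.val * A * g.valᵀ
  map_add' A B := by rw [mul_add, add_mul]
  map_smul' c A := by rw [RingHom.id_apply, Matrix.mul_smul, Matrix.smul_mul]

theorem act_apply {n : ℕ} (g : (Mat n)ˣ) (A : Mat n) : act g A = g.val * A * g.valᵀ := rfl

theorem act_mul {n : ℕ} (g h : (Mat n)ˣ) (A : Mat n) : act (g * h) A = act g (act h A) := by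
  simp [act_apply, Matrix.mul_assoc, Matrix.transpose_mul]

theorem act_one {n : ℕ} (A : Mat n) : act (1 : (Mat n)ˣ) A = A := by
  simp [act_apply]

theorem act_inv_act {n : ℕ} (g : (Mat n)ˣ) (A : Mat n) : act g⁻¹ (act g A) = A := by
  rw [← act_mul, inv_mul_cancel, act_one]

theorem act_act_inv {n : ℕ} (g : (Mat n)ˣ) (A : Mat n) : act g (act g⁻¹ A) = A := by
  rw [← act_mul, mul_inv_cancel, act_one]

theorem act_inj {n : ℕ} (g : (Mat n)ˣ) : Function.Injective (act g) :=
  Function.LeftInverse.injective (act_inv_act g)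

/-- rank one form -/
def sq {n : ℕ} (u : Fin n → ℤ) : Mat n := vecMulVec u u

theorem act_sq {n : ℕ} (g : (Mat n)ˣ) (u : Fin n → ℤ) : act g (sq u) = sq (g.val *ᵥ u) := by
  rw [act_apply, sq, sq, mul_vecMulVec, vecMulVec_mul, vecMul_transpose]

/-- evaluation of a form -/
def ev {n : ℕ} (x : Fin n → ℤ) : Mat n →ₗ[ℤ] ℤ where
  toFun A := x ⬝ᵥ (A *ᵥ x)
  map_add' A B := by rw [add_mulVec, dotProduct_add]
  map_smul' c A := by rw [smul_mulVec, dotProduct_smul, RingHom.id_apply]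

theorem ev_sq {n : ℕ} (x u : Fin n → ℤ) : ev x (sq u) = (u ⬝ᵥ x) ^ 2 := by
  change x ⬝ᵥ (vecMulVec u u *ᵥ x) = _
  rw [vecMulVec_mulVec, dotProduct_smul, dotProduct_comm x u]
  simp [pow_two]

/-- spanning sets of forms -/
def Spanning {n : ℕ} (S : Finset (Mat n)) : Prop :=
  ∀ x : Fin n → ℤ, (∀ A ∈ S, ev x A = 0) → x = 0

/-- root systems data of type A_n -/
structure RootData (n k : ℕ) where
  r : Fin k → Fin n → ℤ
  L : Fin k → (Mat n →ₗ[ℤ] ℤ)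
  G : Mat n →ₗ[ℤ] ℤ
  expand : ∀ u, sq u = ∑ i, L i (sq u) • sq (r i)
  dual : ∀ i j, L i (sq (r j)) = if i = j then 1 else 0
  G_r : ∀ i, G (sq (r i)) = 2
  G_min : ∀ u, u ≠ 0 → G (sq u) ≤ 2 → ∃ i, sq u = sq (r i)
  G_bd : ∀ u i, (u i) ^ 2 ≤ G (sq u)
  span : ∀ x, (∀ i, r i ⬝ᵥ x = 0) → x = 0
  flip : ∀ i, ∃ g : (Mat n)ˣ, (∀ j, j ≠ i → ∃ m, act g (sq (r m)) = sq (r j)) ∧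
    ∀ m, act g (sq (r m)) ≠ sq (r i)

theorem exists_coeff : ∃ c : ℕ → ℝ, (∀ i, 0 < c i) ∧
    ∀ (k : ℕ) (a : Fin k → ℤ), ∑ i : Fin k, c i * a i = 0 → a = 0 := by
  have ht := transcendental_liouvilleNumber (m := 2) le_rfl
  set t := liouvilleNumber ((2 : ℕ) : ℝ) with htd
  have ht2 : Transcendental ℤ (t ^ 2) := ht.pow (by norm_num)
  have ht0 : t ≠ 0 := by
    intro h0
    apply ht
    rw [h0]; exact isAlgebraic_zero
  refine ⟨fun i => (t ^ 2) ^ i, fun i => by positivity, ?_⟩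
  intro k a ha
  rw [transcendental_iff] at ht2
  have := ht2 (∑ i : Fin k, Polynomial.C (a i) * Polynomial.X ^ (i : ℕ)) (by
    rw [map_sum, ← ha]
    apply Finset.sum_congr rfl
    intro i _
    simp [mul_comm])
  ext i
  have h2 := congrArg (fun p => Polynomial.coeff p (i : ℕ)) this
  simp only [Polynomial.finsetSum_coeff, Polynomial.coeff_C_mul, Polynomial.coeff_X_pow,
    Polynomial.coeff_zero] at h2
  rw [Finset.sum_eq_single i] at h2
  · simpa using h2
  · intro j _ hj
    rw [if_neg, mul_zero]
    intro h; exact hj (Fin.ext h.symm)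
  · simp

namespace RootData

variable {n k : ℕ} (R : RootData n k)

/-- standard forms -/
def rho (i : Fin k) : Mat n := sq (R.r i)

theorem rho_inj : Function.Injective R.rho := by
  intro i j h
  have h1 := R.dual i i
  have h2 := R.dual i j
  simp only [rho] at h
  rw [h, h2] at h1
  simpa using h1

/-- the top cell of `g` -/
def cl (g : (Mat n)ˣ) : Finset (Mat n) := univ.image (fun i => act g (R.rho i))

theorem mem_cl {g : (Mat n)ˣ} {w : Mat n} : w ∈ R.cl g ↔ ∃ i, act g (R.rho i) = w := by
  simp [cl]

theorem cl_inj (g : (Mat n)ˣ) : Function.Injective (fun i => act g (R.rho i)) :=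
  (act_inj g).comp R.rho_inj

theorem sum_cl (g : (Mat n)ˣ) {M : Type} [AddCommMonoid M] (f : Mat n → M) :
    ∑ w ∈ R.cl g, f w = ∑ i, f (act g (R.rho i)) := by
  rw [cl, Finset.sum_image]
  intro i _ j _ h
  exact R.cl_inj g h

theorem card_cl (g : (Mat n)ˣ) : (R.cl g).card = k := by
  rw [cl, Finset.card_image_of_injective _ (R.cl_inj g)]; simp

theorem cl_mul (g h : (Mat n)ˣ) : R.cl (g * h) = (R.cl h).image (act g) := by
  simp only [cl, Finset.image_image]
  congr 1
  ext i : 1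
  simp [act_mul]

theorem expand_act (g : (Mat n)ˣ) (b : Fin k) :
    act g (R.rho b) = ∑ i, R.L i (act g (R.rho b)) • R.rho i := by
  rw [rho, act_sq]
  exact R.expand _

/-- the functional of `g`. -/
def phi (g : (Mat n)ˣ) (A : Mat n) : ℤ := R.G (act g⁻¹ A)

theorem cl_form {g : (Mat n)ˣ} {w : Mat n} (h : w ∈ R.cl g) : ∃ v, v ≠ 0 ∧ w = sq v := by
  rw [mem_cl] at h
  obtain ⟨i, rfl⟩ := h
  refine ⟨g.val *ᵥ R.r i, ?_, act_sq _ _⟩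
  intro h0
  have h1 : act g (R.rho i) = 0 := by
    rw [rho, act_sq, h0]; simp [sq]
  have h2 := R.G_r i
  have h3 : R.rho i = 0 := act_inj g (by rw [h1, map_zero])
  rw [rho] at h3
  rw [h3, map_zero] at h2
  norm_num at h2

theorem finite_bd (c : ℤ) : {u : Fin n → ℤ | R.G (sq u) ≤ c}.Finite := by
  apply Set.Finite.subset (Set.finite_Icc (fun _ => -|c| : Fin n → ℤ) (fun _ => |c|))
  intro u hu
  have hu : R.G (sq u) ≤ c := hu
  have key : ∀ i, |u i| ≤ |c| := by
    intro i
    have h1 := R.G_bd u i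
    have h2 : (u i) ^ 2 ≤ |c| := by linarith [le_abs_self c]
    have h3 : |u i| ≤ (u i) ^ 2 := by
      rw [← sq_abs, pow_two]
      rcases (abs_nonneg (u i)).eq_or_lt with h | h
      · rw [← h]; simp
      · nlinarith
    linarith
  exact ⟨fun i => (abs_le.1 (key i)).1, fun i => (abs_le.1 (key i)).2⟩

theorem finite_g {S : Finset (Mat n)} (hS : Spanning S) (hf : ∀ A ∈ S, ∃ v, A = sq v) (c : ℤ) :
    {g : (Mat n)ˣ | ∀ A ∈ S, R.phi g A ≤ c}.Finite := by
  choose! v hv using hf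
  have hB := R.finite_bd c
  have hfin := hB.to_subtype
  let F : {g : (Mat n)ˣ | ∀ A ∈ S, R.phi g A ≤ c} → (S → {u : Fin n → ℤ | R.G (sq u) ≤ c}) :=
    fun g A => ⟨(g.1⁻¹).val *ᵥ v A, by
      have := g.2 A A.2
      rw [phi] at this
      conv at this => lhs; rw [hv A A.2]
      rw [act_sq] at this
      exact this⟩
  have hF : Function.Injective F := by
    intro g g' h
    have h1 : ∀ A ∈ S, (g.1⁻¹).val *ᵥ v A = (g'.1⁻¹).val *ᵥ v A := by
      intro A hA
      have := congrFun h ⟨A, hA⟩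
      exact congrArg Subtype.val this
    have h2 : (g.1⁻¹).val = (g'.1⁻¹).val := by
      ext i j
      have h3 := hS ((g.1⁻¹).val i - (g'.1⁻¹).val i) (by
        intro A hA
        rw [hv A hA, ev_sq]
        have := congrFun (h1 A hA) i
        simp only [mulVec] at this
        rw [dotProduct_sub, dotProduct_comm, this, dotProduct_comm, sub_self]
        simp)
      have h4 := congrFun h3 j
      simp only [Pi.sub_apply, Pi.zero_apply] at h4
      linarith
    have h5 : g.1⁻¹ = g'.1⁻¹ := Units.ext h2
    exact Subtype.ext (inv_injective h5)
  exact Set.finite_coe_iff.1 (Finite.of_injective F hF)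

/-- all top cells -/
def MM : Set (Finset (Mat n)) := Set.range R.cl

open Classical in
/-- chosen group element for a top cell -/
noncomputable def gof (s : Finset (Mat n)) : (Mat n)ˣ :=
  if h : ∃ g, R.cl g = s then h.choose else 1

theorem gof_spec {s : Finset (Mat n)} (hs : s ∈ R.MM) : R.cl (R.gof s) = s := by
  have h : ∃ g, R.cl g = s := hs
  rw [gof, dif_pos h]; exact h.choose_spec

/-- coefficients -/
noncomputable def cc : ℕ → ℝ := exists_coeff.choose

theorem cc_pos (i : ℕ) : 0 < cc i := exists_coeff.choose_spec.1 i

theorem cc_indep (k : ℕ) (a : Fin k → ℤ) (h : ∑ i : Fin k, cc i * a i = 0) : a = 0 :=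
  exists_coeff.choose_spec.2 k a h

/-- coordinates of the base form with respect to a top cell -/
noncomputable def lam (g : (Mat n)ˣ) (i : Fin k) : ℝ :=
  ∑ b : Fin k, cc b * (R.L i (act g⁻¹ (R.rho b)) : ℤ)

/-- coordinates indexed by forms -/
noncomputable def lamX (s : Finset (Mat n)) (w : Mat n) : ℝ :=
  ∑ i, if act (R.gof s) (R.rho i) = w then R.lam (R.gof s) i else 0

theorem lamX_eq (s : Finset (Mat n)) (i : Fin k) :
    R.lamX s (act (R.gof s) (R.rho i)) = R.lam (R.gof s) i := by
  rw [lamX, Finset.sum_eq_single i]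
  · simp
  · intro j _ hj
    rw [if_neg]
    intro h; exact hj (R.cl_inj _ h)
  · simp

/-- Selling expansion of the base form with respect to a linear functional -/
theorem lam_sum (g : (Mat n)ˣ) (f : Mat n →ₗ[ℤ] ℤ) :
    ∑ i, R.lam g i * (f (act g (R.rho i)) : ℤ) = ∑ b : Fin k, cc b * (f (R.rho b) : ℤ) := by
  simp only [lam, Finset.sum_mul]
  rw [Finset.sum_comm]
  apply Finset.sum_congr rfl
  intro b _
  have h1 : f (R.rho b) = ∑ i, R.L i (act g⁻¹ (R.rho b)) * f (act g (R.rho i)) := by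
    conv_lhs => rw [← act_act_inv g (R.rho b), R.expand_act g⁻¹ b]
    simp only [map_sum, map_smul, smul_eq_mul]
  rw [h1]
  push_cast
  rw [Finset.mul_sum]
  apply Finset.sum_congr rfl
  intro i _
  ring

theorem lam_ne (g : (Mat n)ˣ) (i : Fin k) : R.lam g i ≠ 0 := by
  intro h
  have h1 := cc_indep k (fun b => R.L i (act g⁻¹ (R.rho b))) h
  have h2 : R.L i (R.rho i) = 0 := by
    conv_lhs => rw [← act_inv_act g (R.rho i), R.expand_act g i]
    simp only [map_sum, map_smul, smul_eq_mul]
    apply Finset.sum_eq_zero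
    intro j _
    have := congrFun h1 j
    simp only [Pi.zero_apply] at this
    rw [this, mul_zero]
  rw [rho, R.dual] at h2
  simp at h2

/-- phi as linear map -/
def phiL (g : (Mat n)ˣ) : Mat n →ₗ[ℤ] ℤ := R.G.comp (act g⁻¹)

theorem phiL_eq (g : (Mat n)ˣ) (A : Mat n) : R.phiL g A = R.phi g A := rfl

theorem phi_in {g : (Mat n)ˣ} {w : Mat n} (h : w ∈ R.cl g) : R.phi g w = 2 := by
  rw [mem_cl] at h
  obtain ⟨i, rfl⟩ := h
  rw [phi, act_inv_act, rho, R.G_r]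

theorem phi_out {g : (Mat n)ˣ} {v : Fin n → ℤ} (hv : v ≠ 0) (h : sq v ∉ R.cl g) :
    2 < R.phi g (sq v) := by
  by_contra hle
  rw [not_lt, phi, act_sq] at hle
  obtain ⟨i, hi⟩ := R.G_min _ (by
    intro h0
    apply hv
    have : g.val *ᵥ ((g⁻¹).val *ᵥ v) = 0 := by rw [h0]; simp
    rw [mulVec_mulVec, ← Units.val_mul, mul_inv_cancel] at this
    simpa using this) hle
  apply h
  rw [mem_cl]
  refine ⟨i, ?_⟩
  rw [rho, ← hi, ← act_sq, act_act_inv]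

theorem G_nonneg (hn : 0 < n) (u : Fin n → ℤ) : 0 ≤ R.G (sq u) :=
  (sq_nonneg _).trans (R.G_bd u ⟨0, hn⟩)

theorem span_rho : Spanning (univ.image R.rho) := by
  intro x hx
  apply R.span
  intro i
  have := hx (R.rho i) (by simp)
  rw [rho, ev_sq] at this
  exact pow_eq_zero_iff (two_ne_zero) |>.1 this

/-- Voronoi data -/
noncomputable def vor (hn : 0 < n) : VorData (Mat n) where
  M := R.MM
  span := Spanning
  ph s w := R.phi (R.gof s) w
  lam := R.lamX
  h s := ∑ b : Fin k, cc b * (R.phi (R.gof s) (R.rho b) : ℤ)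
  k := k
  span_mono S T hST hS x hx := hS x (fun A hA => hx A (hST hA))
  h_eq := by
    intro s hs s' hs'
    conv_rhs => rw [← R.gof_spec hs]
    rw [R.sum_cl, R.gof_spec hs]
    simp only [lamX_eq]
    exact (R.lam_sum (R.gof s) (R.phiL (R.gof s'))).symm
  ph_in := by
    intro s hs w hw
    rw [← R.gof_spec hs] at hw
    rw [R.phi_in hw]; norm_num
  ph_out := by
    intro s hs s' hs' w hw hw'
    rw [← R.gof_spec hs'] at hw
    rw [← R.gof_spec hs] at hw'
    obtain ⟨v, hv, rfl⟩ := R.cl_form hw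
    exact_mod_cast R.phi_out hv hw'
  lam_ne := by
    intro s hs w hw
    rw [← R.gof_spec hs, mem_cl] at hw
    obtain ⟨i, rfl⟩ := hw
    rw [lamX_eq]
    exact R.lam_ne _ _
  span_pos := by
    intro s hs x hx
    apply R.span_rho
    by_contra hne
    have h1 := R.lam_sum (R.gof s) (ev x)
    have hnn : ∀ i, 0 ≤ ev x (act (R.gof s) (R.rho i)) := by
      intro i; rw [rho, act_sq, ev_sq]; positivity
    have hnn' : ∀ i, 0 ≤ ev x (R.rho i) := by
      intro i; rw [rho, ev_sq]; positivity
    have h2 : ∑ i, R.lam (R.gof s) i * (ev x (act (R.gof s) (R.rho i)) : ℤ) ≤ 0 := by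
      apply Finset.sum_nonpos
      intro i _
      rcases lt_or_ge 0 (R.lam (R.gof s) i) with h | h
      · have := hx (act (R.gof s) (R.rho i)) (by
          rw [mem_filter, lamX_eq]
          refine ⟨?_, h⟩
          exact (Finset.ext_iff.1 (R.gof_spec hs) _).1 (R.mem_cl.2 ⟨i, rfl⟩))
        rw [this]; simp
      · exact mul_nonpos_of_nonpos_of_nonneg h (by exact_mod_cast hnn i)
    push Not at hne
    obtain ⟨A, hA, hA'⟩ := hne
    simp only [mem_image, mem_univ, true_and] at hA
    obtain ⟨i, rfl⟩ := hA
    have h3 : 0 < ∑ b : Fin k, cc b * (ev x (R.rho b) : ℤ) := by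
      apply Finset.sum_pos'
      · intro b _
        exact mul_nonneg (cc_pos b).le (by exact_mod_cast hnn' b)
      · refine ⟨i, mem_univ _, mul_pos (cc_pos i) ?_⟩
        exact_mod_cast lt_of_le_of_ne (hnn' i) (Ne.symm hA')
    linarith
  flip := by
    intro s hs f hf _
    rw [← R.gof_spec hs, mem_cl] at hf
    obtain ⟨i, rfl⟩ := hf
    obtain ⟨g, h1, h2⟩ := R.flip i
    refine ⟨R.cl (R.gof s * g), ⟨_, rfl⟩, ?_, ?_⟩
    · intro w hw
      rw [mem_erase] at hw
      obtain ⟨hw1, hw2⟩ := hw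
      rw [← R.gof_spec hs, mem_cl] at hw2
      obtain ⟨j, hj⟩ := hw2
      subst hj
      obtain ⟨m, hm⟩ := h1 j (by rintro rfl; exact hw1 rfl)
      rw [mem_cl]
      refine ⟨m, ?_⟩
      rw [act_mul, rho, hm, rho]
    · rw [mem_cl]
      rintro ⟨m, hm⟩
      rw [act_mul] at hm
      exact h2 m (act_inj _ hm)
  fin_S := by
    intro S hS
    by_cases hex : ∃ s ∈ R.MM, S ⊆ s
    · obtain ⟨s, hs, hsub⟩ := hex
      apply Set.Finite.subset ((R.finite_g hS (c := 2) (by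
        intro A hA
        have := hsub hA
        rw [← R.gof_spec hs] at this
        obtain ⟨v, _, h⟩ := R.cl_form this
        exact ⟨v, h⟩)).image R.cl)
      rintro s' ⟨hs', hsub'⟩
      refine ⟨R.gof s', ?_, R.gof_spec hs'⟩
      intro A hA
      rw [R.phi_in]
      rw [R.gof_spec hs']; exact hsub' hA
    · convert Set.finite_empty
      rw [Set.eq_empty_iff_forall_notMem]
      intro s hs
      exact hex ⟨s, hs⟩
  fin_h := by
    intro c
    apply Set.Finite.subset ((R.finite_g R.span_rho (c := ∑ b : Fin k, ⌈|c| / cc b⌉) (by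
        intro A hA
        simp only [mem_image, mem_univ, true_and] at hA
        obtain ⟨i, rfl⟩ := hA
        exact ⟨_, rfl⟩)).image R.cl)
    rintro s ⟨hs, hle⟩
    refine ⟨R.gof s, ?_, R.gof_spec hs⟩
    intro A hA
    simp only [mem_image, mem_univ, true_and] at hA
    obtain ⟨i, rfl⟩ := hA
    have hnn : ∀ i, 0 ≤ R.phi (R.gof s) (R.rho i) := by
      intro i
      rw [phi, rho, act_sq]
      exact R.G_nonneg hn _
    have h1 : cc i * (R.phi (R.gof s) (R.rho i) : ℤ) ≤ c := by
      refine le_trans ?_ hle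
      exact Finset.single_le_sum (f := fun b : Fin k => cc b * (R.phi (R.gof s) (R.rho b) : ℝ))
        (fun b _ => mul_nonneg (cc_pos b).le (by exact_mod_cast hnn b)) (mem_univ i)
    have h2 : (R.phi (R.gof s) (R.rho i) : ℝ) ≤ |c| / cc i := by
      rw [le_div_iff₀ (cc_pos i)]
      linarith [le_abs_self c]
    have h3 : R.phi (R.gof s) (R.rho i) ≤ ⌈|c| / cc i⌉ := by
      exact_mod_cast h2.trans (Int.le_ceil _)
    refine h3.trans ?_
    exact Finset.single_le_sum (f := fun b : Fin k => ⌈|c| / cc b⌉)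
      (fun b _ => Int.ceil_nonneg (div_nonneg (abs_nonneg _) (cc_pos b).le)) (mem_univ i)
  card := by
    rintro s ⟨g, rfl⟩
    exact R.card_cl g
  M_ne := ⟨_, 1, rfl⟩

end RootData
end SolA


namespace SolA
open Finset Matrix

/-- `tr ((1+J) A)` -/
def Gfun (n : ℕ) : Mat n →ₗ[ℤ] ℤ where
  toFun A := ∑ i, A i i + ∑ i, ∑ j, A i j
  map_add' A B := by
    simp only [Matrix.add_apply, Finset.sum_add_distrib]; ring
  map_smul' c A := by
    simp only [Matrix.smul_apply, smul_eq_mul, RingHom.id_apply, mul_add, Finset.mul_sum]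

theorem Gfun_apply (n : ℕ) (A : Mat n) : Gfun n A = ∑ i, A i i + ∑ i, ∑ j, A i j := rfl

theorem Gfun_sq (n : ℕ) (u : Fin n → ℤ) : Gfun n (sq u) = ∑ i, (u i) ^ 2 + (∑ i, u i) ^ 2 := by
  rw [Gfun_apply]
  simp only [sq, vecMulVec_apply]
  rw [pow_two (∑ i, u i), Finset.sum_mul_sum]
  simp only [pow_two]

theorem Gfun_bd (n : ℕ) (u : Fin n → ℤ) (i : Fin n) : (u i) ^ 2 ≤ Gfun n (sq u) := by
  rw [Gfun_sq]
  have := Finset.single_le_sum (f := fun i => (u i) ^ 2) (fun i _ => sq_nonneg _) (mem_univ i)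
  have h2 := sq_nonneg (∑ i, u i)
  linarith

/-- entry functional -/
def ent {n : ℕ} (i j : Fin n) : Mat n →ₗ[ℤ] ℤ := Matrix.entryLinearMap ℤ ℤ i j

theorem ent_apply {n : ℕ} (i j : Fin n) (A : Mat n) : ent i j A = A i j := rfl

theorem small_entry {n : ℕ} {u : Fin n → ℤ} (h : Gfun n (sq u) ≤ 2) (i : Fin n) :
    u i ∈ ({-1, 0, 1} : Finset ℤ) := by
  have := Gfun_bd n u i
  have h1 : u i ≤ 1 := by nlinarith
  have h2 : -1 ≤ u i := by nlinarith
  simp only [mem_insert, mem_singleton]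
  omega

/-- roots of `A_2` -/
def r2 : Fin 3 → Fin 2 → ℤ := ![![1, 0], ![0, 1], ![1, -1]]

/-- roots of `A_3` -/
def r3 : Fin 6 → Fin 3 → ℤ :=
  ![![1, 0, 0], ![0, 1, 0], ![0, 0, 1], ![1, -1, 0], ![1, 0, -1], ![0, 1, -1]]

/-- root data for `n = 2` -/
def R2 : RootData 2 3 where
  r := r2
  L := ![ent 0 0 + ent 0 1, ent 1 0 + ent 1 1, - ent 0 1]
  G := Gfun 2
  expand u := by
    ext i j
    rw [Matrix.sum_apply]
    simp only [Matrix.smul_apply, smul_eq_mul]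
    fin_cases i <;> fin_cases j <;>
      simp [Fin.sum_univ_succ, ent_apply, sq, vecMulVec_apply, r2] <;> ring
  dual := by
    intro i j
    fin_cases i <;> fin_cases j <;> simp [ent_apply, sq, vecMulVec_apply, r2]
  G_r := by
    intro i
    rw [Gfun_sq]
    fin_cases i <;> simp [Fin.sum_univ_succ, r2]
  G_min := by
    intro u hu hG
    have key : ∀ a ∈ ({-1, 0, 1} : Finset ℤ), ∀ b ∈ ({-1, 0, 1} : Finset ℤ),
      ![a, b] ≠ 0 → Gfun 2 (sq ![a, b]) ≤ 2 → ∃ i, sq ![a, b] = sq (r2 i) := by decide +kernel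
    have h := key (u 0) (small_entry hG 0) (u 1) (small_entry hG 1)
    have e : ![u 0, u 1] = u := by ext i; fin_cases i <;> rfl
    rw [e] at h
    exact h hu hG
  G_bd := Gfun_bd 2
  span := by
    intro x hx
    have h0 := hx 0
    have h1 := hx 1
    simp [r2, dotProduct, Fin.sum_univ_succ] at h0 h1
    ext i; fin_cases i <;> simp [h0, h1]
  flip := by
    intro i
    fin_cases i
    · exact ⟨⟨!![1, 0; -1, 1], !![1, 0; 1, 1], by decide +kernel, by decide +kernel⟩,
        by decide +kernel⟩
    · exact ⟨⟨!![1, -1; 0, 1], !![1, 1; 0, 1], by decide +kernel, by decide +kernel⟩,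
        by decide +kernel⟩
    · exact ⟨⟨!![0, 1; -1, 0], !![0, -1; 1, 0], by decide +kernel, by decide +kernel⟩,
        by decide +kernel⟩

/-- root data for `n = 3` -/
def R3 : RootData 3 6 where
  r := r3
  L := ![ent 0 0 + ent 0 1 + ent 0 2, ent 1 0 + ent 1 1 + ent 1 2, ent 2 0 + ent 2 1 + ent 2 2,
    - ent 0 1, - ent 0 2, - ent 1 2]
  G := Gfun 3
  expand u := by
    ext i j
    rw [Matrix.sum_apply]
    simp only [Matrix.smul_apply, smul_eq_mul]
    fin_cases i <;> fin_cases j <;>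
      simp [Fin.sum_univ_succ, ent_apply, sq, vecMulVec_apply, r3] <;> ring
  dual := by
    intro i j
    fin_cases i <;> fin_cases j <;> simp [ent_apply, sq, vecMulVec_apply, r3]
  G_r := by
    intro i
    rw [Gfun_sq]
    fin_cases i <;> simp [Fin.sum_univ_succ, r3]
  G_min := by
    intro u hu hG
    have key : ∀ a ∈ ({-1, 0, 1} : Finset ℤ), ∀ b ∈ ({-1, 0, 1} : Finset ℤ),
      ∀ c ∈ ({-1, 0, 1} : Finset ℤ),
      ![a, b, c] ≠ 0 → Gfun 3 (sq ![a, b, c]) ≤ 2 → ∃ i, sq ![a, b, c] = sq (r3 i) := by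
      decide +kernel
    have h := key (u 0) (small_entry hG 0) (u 1) (small_entry hG 1) (u 2) (small_entry hG 2)
    have e : ![u 0, u 1, u 2] = u := by ext i; fin_cases i <;> rfl
    rw [e] at h
    exact h hu hG
  G_bd := Gfun_bd 3
  span := by
    intro x hx
    have h0 := hx 0
    have h1 := hx 1
    have h2 := hx 2
    simp [r3, dotProduct, Fin.sum_univ_succ] at h0 h1 h2
    ext i; fin_cases i <;> simp [h0, h1, h2]
  flip := by
    intro i
    fin_cases i
    · exact ⟨⟨!![0, 0, 1; 0, -1, -1; 1, 1, 0], !![1, 1, 1; -1, -1, 0; 1, 0, 0],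
        by decide +kernel, by decide +kernel⟩, by decide +kernel⟩
    · exact ⟨⟨!![0, 1, 1; 0, 0, -1; -1, -1, 0], !![-1, -1, -1; 1, 1, 0; 0, -1, 0],
        by decide +kernel, by decide +kernel⟩, by decide +kernel⟩
    · exact ⟨⟨!![0, 1, 1; 1, 0, 1; 0, 0, -1], !![0, 1, 1; 1, 0, 1; 0, 0, -1],
        by decide +kernel, by decide +kernel⟩, by decide +kernel⟩
    · exact ⟨⟨!![0, 0, 1; 0, -1, 0; 1, 1, 0], !![0, 1, 1; 0, -1, 0; 1, 0, 0],
        by decide +kernel, by decide +kernel⟩, by decide +kernel⟩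
    · exact ⟨⟨!![0, 0, 1; 0, -1, -1; 1, 1, 1], !![0, 1, 1; -1, -1, 0; 1, 0, 0],
        by decide +kernel, by decide +kernel⟩, by decide +kernel⟩
    · exact ⟨⟨!![0, 1, 1; 0, 0, -1; -1, -1, -1], !![-1, 0, -1; 1, 1, 0; 0, -1, 0],
        by decide +kernel, by decide +kernel⟩, by decide +kernel⟩

end SolA


namespace SolA
open CategoryTheory

theorem isZero_of_retract {G : Type} [Group G] {A B : Rep.{0} ℚ G} (f : A ⟶ B) (g : B ⟶ A)
    (h : f ≫ g = 𝟙 A) {i : ℕ} (hB : Limits.IsZero (groupCohomology B i)) :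
    Limits.IsZero (groupCohomology A i) := by
  rw [Limits.IsZero.iff_id_eq_zero]
  have h1 : (groupCohomology.functor ℚ G i).map f ≫ (groupCohomology.functor ℚ G i).map g
      = 𝟙 _ := by
    rw [← Functor.map_comp, h, CategoryTheory.Functor.map_id]
  have h2 : (groupCohomology.functor ℚ G i).map f = 0 :=
    Limits.IsZero.eq_of_tgt hB _ _
  rw [h2, Limits.zero_comp] at h1
  exact h1.symm

theorem isZero_of_avg {G : Type} [Group G] {V : Type} [AddCommGroup V] [Module ℚ V]
    (ρ : Representation ℚ G V)
    (π : (G → V) →ₗ[ℚ] V) (h1 : ∀ a, π (fun h => ρ h a) = a)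
    (h2 : ∀ g F, π (fun h => F (h * g)) = ρ g (π F)) (i : ℕ) :
    Limits.IsZero (groupCohomology (Rep.of ρ) (i+1)) := by
  let A : Rep.{0} ℚ (⊥ : Subgroup G) :=
    Rep.of (Representation.trivial ℚ (⊥ : Subgroup G) V)
  let B := Rep.coind (⊥ : Subgroup G).subtype A
  have hmem : ∀ F : G → V, F ∈ Representation.coindV (⊥ : Subgroup G).subtype A.ρ := by
    intro F g h
    have : g = 1 := Subsingleton.elim _ _
    subst this
    simp
  let f : Rep.of ρ ⟶ B := Rep.ofHom
    { toFun := fun a => ⟨fun h => ρ h a, hmem _⟩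
      map_add' := by intro a b; ext; simp
      map_smul' := by intro a b; ext; simp
      isIntertwining' := by
        intro g; ext a x
        change ρ x (ρ g a) = ρ (x * g) a
        rw [map_mul]; rfl }
  let g : B ⟶ Rep.of ρ := Rep.ofHom
    { toFun := fun F => π F.1
      map_add' := by intro a b; exact map_add π _ _
      map_smul' := by intro a b; exact map_smul π _ _
      isIntertwining' := by
        intro g; ext F; exact h2 g F.1 }
  refine isZero_of_retract f g ?_ (B := B) ?_
  · apply Rep.hom_ext
    ext a
    exact h1 a
  · exact Limits.IsZero.of_iso (isZero_groupCohomology_succ_of_subsingleton A i)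
      (groupCohomology.coindIso A (i+1))

theorem isZero_les {G : Type} [Group G] {U V W : Type} [AddCommGroup U] [Module ℚ U]
    [AddCommGroup V] [Module ℚ V] [AddCommGroup W] [Module ℚ W]
    (ρ : Representation ℚ G U) (σ : Representation ℚ G V) (τ : Representation ℚ G W)
    (f : U →ₗ[ℚ] V) (g : V →ₗ[ℚ] W) (hf : ∀ x u, f (ρ x u) = σ x (f u))
    (hg : ∀ x u, g (σ x u) = τ x (g u)) (hinj : Function.Injective f)
    (hsurj : Function.Surjective g) (hex : ∀ v, g v = 0 ↔ ∃ u, f u = v) (i : ℕ)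
    (h3 : Limits.IsZero (groupCohomology (Rep.of τ) i))
    (h2 : Limits.IsZero (groupCohomology (Rep.of σ) (i+1))) :
    Limits.IsZero (groupCohomology (Rep.of ρ) (i+1)) := by
  let F : Rep.of ρ ⟶ Rep.of σ := Rep.ofHom (f.intertwiningMap_of_isIntertwiningMap _ _ hf)
  let K : Rep.of σ ⟶ Rep.of τ := Rep.ofHom (g.intertwiningMap_of_isIntertwiningMap _ _ hg)
  let X : ShortComplex (Rep ℚ G) := ⟨F, K, by
    apply Rep.hom_ext
    ext a
    exact (hex _).2 ⟨a, rfl⟩⟩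
  have hX : X.ShortExact :=
    { exact := by
        rw [← ShortComplex.exact_map_iff_of_faithful X (forget₂ (Rep ℚ G) (ModuleCat ℚ))]
        rw [ShortComplex.moduleCat_exact_iff]
        intro v hv
        exact (hex v).1 hv
      mono_f := (Rep.mono_iff_injective _).2 hinj
      epi_g := (Rep.epi_iff_surjective _).2 hsurj }
  have := groupCohomology.epi_δ_of_isZero hX i h2
  exact Limits.IsZero.of_epi (groupCohomology.δ hX i (i+1) rfl) h3

theorem isZero_H0 {G : Type} [Group G] {V : Type} [AddCommGroup V] [Module ℚ V]
    (ρ : Representation ℚ G V) (h : ∀ v, (∀ g, ρ g v = v) → v = 0) :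
    Limits.IsZero (groupCohomology (Rep.of ρ) 0) := by
  refine Limits.IsZero.of_iso ?_ (groupCohomology.H0Iso (Rep.of ρ))
  have : Subsingleton (Rep.of ρ).ρ.invariants := by
    refine ⟨fun a b => ?_⟩
    have ha := h a.1 a.2
    have hb := h b.1 b.2
    exact Subtype.ext (ha.trans hb.symm)
  exact ModuleCat.isZero_of_subsingleton _

theorem isZero_line {G : Type} [Group G] {V : Type} [AddCommGroup V] [Module ℚ V]
    (ρ : Representation ℚ G V) (o : V) (ho : o ≠ 0) (hinv : ∀ g, ρ g o = o)
    (hspan : ∀ v, ∃ c : ℚ, v = c • o) {i : ℕ}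
    (h : Limits.IsZero (groupCohomology (Rep.of ρ) i)) :
    Limits.IsZero (groupCohomology (Rep.trivial ℚ G ℚ) i) := by
  choose c hc using hspan
  have hcu : ∀ (a b : ℚ), a • o = b • o → a = b := fun a b hab => smul_left_injective ℚ ho hab
  let f : Rep.trivial ℚ G ℚ ⟶ Rep.of ρ := Rep.ofHom
    { toFun := fun a => a • o
      map_add' := by intro a b; exact add_smul _ _ _
      map_smul' := by intro a b; exact mul_smul _ _ _
      isIntertwining' := by
        intro g; ext; simp [hinv] }
  let g : Rep.of ρ ⟶ Rep.trivial ℚ G ℚ := Rep.ofHom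
    { toFun := fun v => c v
      map_add' := by
        intro a b; apply hcu; rw [add_smul, ← hc, ← hc, ← hc]
      map_smul' := by
        intro a b; apply hcu; simp only [RingHom.id_apply, smul_eq_mul]; rw [mul_smul, ← hc, ← hc]
      isIntertwining' := by
        intro g; ext v
        apply hcu
        change c (ρ g v) • o = c v • o
        rw [← hc, ← hc]
        conv_lhs => rw [hc v]
        rw [map_smul, hinv, ← hc] }
  refine isZero_of_retract f g ?_ h
  apply Rep.hom_ext
  ext
  change c ((1:ℚ) • o) = 1
  apply hcu
  rw [← hc]

theorem isZero_finite {G : Type} [Group G] [Finite G] (i : ℕ) :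
    Limits.IsZero (groupCohomology (Rep.trivial ℚ G ℚ) (i+1)) := by
  have := Fintype.ofFinite G
  refine isZero_of_avg (Representation.trivial ℚ G ℚ)
    ((Fintype.card G : ℚ)⁻¹ • ∑ g : G, LinearMap.proj g) ?_ ?_ i
  · intro a
    simp
  · intro g F
    simp
    exact Fintype.sum_equiv (Equiv.mulRight g) _ _ (fun x => rfl)

end SolA


namespace SolA
open CategoryTheory Equiv

section action
variable {X : Type} [DecidableEq X] {G : Type} [Group G]

/-- twisted permutation action on functions on lists -/
noncomputable def rho (α : G →* Equiv.Perm X) (ε : G →* ℤˣ) :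
    Representation ℚ G (List X → ℚ) where
  toFun g :=
    { toFun := fun φ l => ((ε g : ℤ) : ℚ) * φ (l.map (α g⁻¹))
      map_add' := by intro φ ψ; ext l; simp [mul_add]
      map_smul' := by intro c φ; ext l; simp; ring }
  map_one' := by ext φ l; simp
  map_mul' := by
    intro g h; ext φ l
    simp [List.map_map, mul_assoc, Perm.coe_mul]

theorem rho_apply (α : G →* Equiv.Perm X) (ε : G →* ℤˣ) (g : G) (φ : List X → ℚ) (l : List X) :
    rho α ε g φ l = ((ε g : ℤ) : ℚ) * φ (l.map (α g⁻¹)) := rfl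

theorem toFinset_map (f : X → X) (l : List X) : (l.map f).toFinset = l.toFinset.image f := by
  ext x; simp

/-- equivariance data -/
structure EqData (C : CellData X) (α : G →* Equiv.Perm X) (ε : G →* ℤˣ) : Prop where
  hcell : ∀ g S, C.cell S → C.cell (S.image (α g))
  hstab : ∀ S, C.cell S → {g | S.image (α g) = S}.Finite

variable {C : CellData X} {α : G →* Equiv.Perm X} {ε : G →* ℤˣ} (E : EqData C α ε)

include E

theorem EqData.cell_iff (g : G) (S : Finset X) : C.cell (S.image (α g)) ↔ C.cell S := by
  refine ⟨fun h => ?_, E.hcell g S⟩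
  have := E.hcell g⁻¹ _ h
  rw [Finset.image_image, ← Perm.coe_mul, ← map_mul] at this
  simpa using this

theorem EqData.U_le (j : ℕ) (g : G) : C.U j ≤ (C.U j).comap (rho α ε g) := by
  rintro φ ⟨h1, h2⟩
  refine ⟨fun l hl => ?_, fun l a b hab ha hb => ?_⟩
  · rw [rho_apply] at hl
    have := h1 _ (right_ne_zero_of_mul hl)
    rw [toFinset_map, E.cell_iff] at this
    exact ⟨List.Nodup.of_map _ this.1, this.2.1, by simpa using this.2.2⟩
  · rw [rho_apply, rho_apply]
    have h3 : (l.map (swap a b)).map (α g⁻¹) =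
        (l.map (α g⁻¹)).map (swap (α g⁻¹ a) (α g⁻¹ b)) := by
      rw [swap_apply_apply]
      simp [List.map_map]
    rw [h3, h2 _ _ _ (by simpa using hab) (List.mem_map_of_mem ha) (List.mem_map_of_mem hb)]
    ring

theorem EqData.d_rho (g : G) (φ : List X → ℚ) : C.d (rho α ε g φ) = rho α ε g (C.d φ) := by
  ext l
  rw [rho_apply]
  by_cases hc : C.cell l.toFinset
  · have hc' : C.cell (l.map (α g⁻¹)).toFinset := by rwa [toFinset_map, E.cell_iff]
    rw [C.d_cell _ hc, C.d_cell _ hc', Finset.mul_sum]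
    have : C.nb (l.map (α g⁻¹)).toFinset = (C.nb l.toFinset).image (α g⁻¹) := by
      ext w
      obtain ⟨w, rfl⟩ := (α g⁻¹).surjective w
      rw [(α g⁻¹).injective.mem_finset_image, C.nb_iff _ _ hc', C.nb_iff _ _ hc, toFinset_map,
        ← Finset.image_insert, E.cell_iff, (α g⁻¹).injective.mem_finset_image]
    rw [this, Finset.sum_image (fun x _ y _ h => (α g⁻¹).injective h)]
    rfl
  · rw [C.d_not _ hc, C.d_not _ (by rwa [toFinset_map, E.cell_iff]), mul_zero]

omit E in
/-- cycles -/
noncomputable def ZZ (C : CellData X) (j : ℕ) : Submodule ℚ (List X → ℚ) := C.U j ⊓ LinearMap.ker C.d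

theorem EqData.Z_le (j : ℕ) (g : G) : ZZ C j ≤ (ZZ C j).comap (rho α ε g) := by
  rintro φ ⟨h1, h2⟩
  refine ⟨E.U_le j g h1, ?_⟩
  change C.d _ = 0
  rw [E.d_rho, LinearMap.mem_ker.1 h2, map_zero]

/-- representation on chains -/
noncomputable abbrev EqData.repU (j : ℕ) := (rho α ε).subrepresentation (C.U j) (E.U_le j)
/-- representation on cycles -/
noncomputable abbrev EqData.repZ (j : ℕ) := (rho α ε).subrepresentation (ZZ C j) (E.Z_le j)

omit E in
/-- orbit relation -/
def orb (α : G →* Equiv.Perm X) : Setoid (Finset X) where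
  r S T := ∃ g, S.image (α g) = T
  iseqv :=
    { refl := fun S => ⟨1, by simp⟩
      symm := by
        rintro S T ⟨g, rfl⟩
        exact ⟨g⁻¹, by rw [Finset.image_image, ← Perm.coe_mul, ← map_mul]; simp⟩
      trans := by
        rintro S T R ⟨g, rfl⟩ ⟨h, rfl⟩
        exact ⟨h * g, by rw [Finset.image_image, ← Perm.coe_mul, ← map_mul]⟩ }

omit E in
/-- orbit representative -/
noncomputable def rp (α : G →* Equiv.Perm X) (S : Finset X) : Finset X :=
  (Quotient.mk (orb α) S).out

omit E in
theorem rp_spec (α : G →* Equiv.Perm X) (S : Finset X) : ∃ g, (rp α S).image (α g) = S :=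
  Quotient.exact (s := orb α) (Quotient.out_eq (Quotient.mk (orb α) S))

omit E in
theorem rp_image (α : G →* Equiv.Perm X) (S : Finset X) (g : G) :
    rp α (S.image (α g)) = rp α S := by
  unfold rp
  congr 1
  exact (Quotient.sound (s := orb α) (⟨g, rfl⟩ : (orb α).r _ _)).symm

open Classical in
omit E in
/-- set of transporters -/
noncomputable def tr (α : G →* Equiv.Perm X) (S : Finset X) : Finset G :=
  if h : {g | (rp α S).image (α g) = S}.Finite then h.toFinset else ∅

theorem EqData.tr_fin {S : Finset X} (h : C.cell S) : {g | (rp α S).image (α g) = S}.Finite := by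
  obtain ⟨g0, hg0⟩ := rp_spec α S
  have hc : C.cell (rp α S) := by rw [← hg0, E.cell_iff] at h; exact h
  refine ((E.hstab _ hc).image (fun g => g0 * g)).subset ?_
  intro g hg
  refine ⟨g0⁻¹ * g, ?_, by simp⟩
  change (rp α S).image (α (g0⁻¹ * g)) = rp α S
  rw [map_mul, Perm.coe_mul, ← Finset.image_image, hg]
  conv_lhs => rw [← hg0]
  rw [Finset.image_image, ← Perm.coe_mul, ← map_mul]; simp

theorem EqData.mem_tr {S : Finset X} (h : C.cell S) (g : G) :
    g ∈ tr α S ↔ (rp α S).image (α g) = S := by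
  unfold tr
  rw [dif_pos (E.tr_fin h)]
  simp

theorem EqData.tr_card {S : Finset X} (h : C.cell S) : (tr α S).card ≠ 0 := by
  obtain ⟨g0, hg0⟩ := rp_spec α S
  exact Finset.card_ne_zero_of_mem ((E.mem_tr h g0).2 hg0)

theorem EqData.tr_image {S : Finset X} (h : C.cell S) (x : G) :
    tr α S = (tr α (S.image (α x⁻¹))).map (mulLeftEmbedding x) := by
  have h' : C.cell (S.image (α x⁻¹)) := by rwa [E.cell_iff]
  ext g
  rw [E.mem_tr h, Finset.mem_map]
  constructor
  · intro hg
    refine ⟨x⁻¹ * g, ?_, by simp⟩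
    rw [E.mem_tr h', rp_image, map_mul, Perm.coe_mul, ← Finset.image_image, hg]
  · rintro ⟨g', hg', rfl⟩
    rw [E.mem_tr h', rp_image] at hg'
    simp only [mulLeftEmbedding_apply]
    rw [map_mul, Perm.coe_mul, ← Finset.image_image, hg', Finset.image_image, ← Perm.coe_mul,
      ← map_mul]
    simp

omit E in
/-- averaging -/
noncomputable def avg (α : G →* Equiv.Perm X) (ε : G →* ℤˣ) (F : G → (List X → ℚ)) : List X → ℚ :=
  fun l => ((tr α l.toFinset).card : ℚ)⁻¹ * ∑ g ∈ tr α l.toFinset, rho α ε g (F g⁻¹) l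

theorem EqData.avg_mem {j : ℕ} {F : G → (List X → ℚ)} (hF : ∀ g, F g ∈ C.U j) :
    avg α ε F ∈ C.U j := by
  have hF' : ∀ g, rho α ε g (F g⁻¹) ∈ C.U j := fun g => E.U_le j g (hF _)
  refine ⟨fun l hl => ?_, fun l a b hab ha hb => ?_⟩
  · obtain ⟨g, hg, h⟩ := Finset.exists_ne_zero_of_sum_ne_zero (right_ne_zero_of_mul hl)
    exact (hF' g).1 l h
  · unfold avg
    rw [CellData.toFinset_map_swap ha hb, ← mul_neg, ← Finset.sum_neg_distrib]
    congr 1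
    exact Finset.sum_congr rfl fun g _ => (hF' g).2 l a b hab ha hb

theorem EqData.acyclic_U (j i : ℕ) :
    Limits.IsZero (groupCohomology (Rep.of (E.repU j)) (i+1)) := by
  refine isZero_of_avg (E.repU j)
    { toFun := fun F => ⟨avg α ε (fun g => (F g).1), E.avg_mem fun g => (F g).2⟩
      map_add' := ?_
      map_smul' := ?_ } ?_ ?_ i
  · intro F F'
    ext l
    simp [avg, Finset.sum_add_distrib, mul_add]
  · intro c F
    ext l
    simp only [avg, Pi.smul_apply, SetLike.val_smul, map_smul, smul_eq_mul, RingHom.id_apply]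
    rw [← Finset.mul_sum]; ring
  · intro a
    ext l
    change ((tr α l.toFinset).card : ℚ)⁻¹ * ∑ g ∈ tr α l.toFinset,
      rho α ε g (rho α ε g⁻¹ a.1) l = a.1 l
    have h : ∀ g, rho α ε g (rho α ε g⁻¹ a.1) = a.1 := by
      intro g
      rw [← Module.End.mul_apply, ← map_mul]; simp
    simp only [h]
    by_cases hc : C.cell l.toFinset
    · have := E.tr_card hc
      simp
      field_simp
    · have : a.1 l = 0 := by
        by_contra h'
        exact hc (a.2.1 l h').2.1
      simp [this]
  · intro x F
    ext l
    change ((tr α l.toFinset).card : ℚ)⁻¹ * ∑ g ∈ tr α l.toFinset,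
      rho α ε g (F (g⁻¹ * x)).1 l = rho α ε x (avg α ε (fun g => (F g).1)) l
    rw [rho_apply]
    unfold avg
    by_cases hc : C.cell l.toFinset
    · rw [E.tr_image hc x, toFinset_map, Finset.card_map, Finset.sum_map, mul_left_comm]
      congr 1
      rw [Finset.mul_sum]
      apply Finset.sum_congr rfl
      intro g hg
      rw [← rho_apply α ε, ← Module.End.mul_apply, ← map_mul]
      simp
    · have h : ∀ g y l, ¬ C.cell l.toFinset → rho α ε g (F y).1 l = 0 := by
        intro g y l hc
        by_contra h'
        exact hc ((E.U_le j g (F y).2).1 l h').2.1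
      rw [Finset.sum_eq_zero (fun g _ => h g _ l hc), Finset.sum_eq_zero (fun g _ => h g _ _ ?_)]
      · simp
      · rwa [toFinset_map, E.cell_iff]

theorem EqData.main {k : ℕ} (hk : ∀ S, C.cell S → S.card ≤ k) (hk0 : C.s0.card = k)
    (hpos : 0 < k) (hempty : ¬ C.cell ∅)
    (hinv : ∀ S, C.cell S → S.card < k → ∃ g, (ε g = 1 ∧ ∃ a ∈ S, ∃ b ∈ S, a ≠ b ∧
      ∀ x ∈ S, α g x = swap a b x) ∨ (ε g = -1 ∧ ∀ x ∈ S, α g x = x))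
    (o : List X → ℚ) (ho : o ∈ C.U k) (hdo : C.d o = 0) (l0 : List X) (hl0 : l0.toFinset = C.s0)
    (hn0 : l0.Nodup) (ho0 : o l0 ≠ 0) (hoinv : ∀ g, rho α ε g o = o) (i : ℕ) :
    Limits.IsZero (groupCohomology (Rep.trivial ℚ G ℚ) (i+1)) := by
  have hH0 : ∀ j, j < k → Limits.IsZero (groupCohomology (Rep.of (E.repZ j)) 0) := by
    intro j hj
    apply isZero_H0
    rintro ⟨φ, hφ, hd⟩ hg
    have hg' : ∀ g, rho α ε g φ = φ := fun g => congrArg Subtype.val (hg g)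
    ext l
    change φ l = 0
    by_contra hl
    obtain ⟨hn, hc, hlen⟩ := hφ.1 l hl
    obtain ⟨g, hg1⟩ := hinv _ hc (by rw [List.toFinset_card_of_nodup hn]; omega)
    have h1 := congrFun (hg' g) (l.map (α g))
    rw [rho_apply] at h1
    simp only [List.map_map, ← Perm.coe_mul, ← map_mul] at h1
    simp only [inv_mul_cancel, map_one, Perm.coe_one, List.map_id] at h1
    rcases hg1 with ⟨he, a, ha, b, hb, hab, hx⟩ | ⟨he, hx⟩
    · have h2 : l.map (α g) = l.map (swap a b) :=
        List.map_congr_left fun x hxl => hx x (by simpa using hxl)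
      rw [h2, hφ.2 l a b hab (by simpa using ha) (by simpa using hb), he] at h1
      apply hl
      simp at h1
      linarith
    · have h2 : l.map (α g) = l := by
        conv_rhs => rw [← List.map_id l]
        exact List.map_congr_left fun x hxl => hx x (by simpa using hxl)
      rw [h2, he] at h1
      apply hl
      simp at h1
      linarith
  have step : ∀ j, j < k → ∀ i, Limits.IsZero (groupCohomology (Rep.of (E.repZ j)) i) →
      Limits.IsZero (groupCohomology (Rep.of (E.repZ (j+1))) (i+1)) := by
    intro j hj i hi
    refine isZero_les (E.repZ (j+1)) (E.repU (j+1)) (E.repZ j)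
      { toFun := fun φ => ⟨φ.1, φ.2.1⟩
        map_add' := fun _ _ => rfl
        map_smul' := fun _ _ => rfl }
      { toFun := fun φ => ⟨C.d φ.1, C.d_mem φ.2, C.d_d φ.2⟩
        map_add' := fun _ _ => by ext1; exact map_add C.d _ _
        map_smul' := fun _ _ => by ext1; exact map_smul C.d _ _ } ?_ ?_ ?_ ?_ ?_ i hi
        (E.acyclic_U _ _)
    · intro x u; rfl
    · intro x u
      apply Subtype.ext
      exact E.d_rho x u.1
    · intro u v h
      have := congrArg Subtype.val h
      exact Subtype.ext this
    · rintro ⟨z, hz, hdz⟩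
      obtain ⟨ψ, hψ, h⟩ := C.exact_lt (by omega) hz hdz
      exact ⟨⟨ψ, hψ⟩, Subtype.ext h⟩
    · rintro ⟨v, hv⟩
      constructor
      · intro h
        exact ⟨⟨v, hv, congrArg Subtype.val h⟩, rfl⟩
      · rintro ⟨u, hu⟩
        have : u.1 = v := congrArg Subtype.val hu
        apply Subtype.ext
        change C.d v = 0
        rw [← this]
        exact u.2.2
  have hZ0 : Subsingleton (ZZ C 0) := by
    refine ⟨fun a b => ?_⟩
    have : ∀ a : ZZ C 0, a = 0 := by
      rintro ⟨φ, hφ, hd⟩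
      ext l
      change φ l = 0
      by_contra hl
      obtain ⟨hn, hc, hlen⟩ := hφ.1 l hl
      have : l = [] := List.length_eq_zero_iff.1 hlen
      subst this
      exact hempty hc
    rw [this a, this b]
  have all : ∀ j, j < k → ∀ i, Limits.IsZero (groupCohomology (Rep.of (E.repZ j)) i) := by
    intro j
    induction j with
    | zero =>
      intro h i
      cases i with
      | zero => exact hH0 0 h
      | succ i => exact isZero_of_avg _ 0 (fun a => Subsingleton.elim _ _)
                    (fun _ _ => Subsingleton.elim _ _) i
    | succ j ih =>
      intro h i
      cases i with
      | zero => exact hH0 _ h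
      | succ i => exact step j (by omega) i (ih (by omega) i)
  have hfin : Limits.IsZero (groupCohomology (Rep.of (E.repZ k)) (i+1)) := by
    obtain ⟨j, rfl⟩ : ∃ j, k = j + 1 := ⟨k - 1, by omega⟩
    exact step j (by omega) i (all j (by omega) i)
  refine isZero_line (E.repZ k) ⟨o, ho, hdo⟩ ?_ ?_ ?_ hfin
  · intro h
    exact ho0 (congrFun (congrArg Subtype.val h) l0)
  · intro g
    exact Subtype.ext (hoinv g)
  · rintro ⟨z, hz, hdz⟩
    refine ⟨z l0 / o l0, ?_⟩
    apply Subtype.ext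
    change z = (z l0 / o l0) • o
    rw [← sub_eq_zero]
    refine C.top_unique hk (Submodule.sub_mem _ hz (Submodule.smul_mem _ _ ho)) ?_ l0 hl0 hn0 ?_
    · rw [map_sub, map_smul, hdo, LinearMap.mem_ker.1 hdz]; simp
    · simp; field_simp; simp

end action
end SolA


namespace SolA
open CategoryTheory Matrix Finset

/-- congruence action as permutations -/
def actPerm (n : ℕ) : (Mat n)ˣ →* Equiv.Perm (Mat n) where
  toFun g := ⟨act g, act g⁻¹, act_inv_act g, act_act_inv g⟩
  map_one' := by ext1 A; exact act_one A
  map_mul' g h := by ext1 A; exact act_mul g h A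

theorem actPerm_apply {n : ℕ} (g : (Mat n)ˣ) (A : Mat n) : actPerm n g A = act g A := rfl

theorem actPerm_coe {n : ℕ} (g : (Mat n)ˣ) : (actPerm n g : Mat n → Mat n) = act g := rfl

theorem ev_act {n : ℕ} (g : (Mat n)ˣ) (x : Fin n → ℤ) (A : Mat n) :
    ev x (act g A) = ev (g.valᵀ *ᵥ x) A := by
  change x ⬝ᵥ ((g.val * A * g.valᵀ) *ᵥ x) = (g.valᵀ *ᵥ x) ⬝ᵥ (A *ᵥ (g.valᵀ *ᵥ x))
  rw [← mulVec_mulVec, ← mulVec_mulVec, dotProduct_mulVec, mulVec_transpose]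

theorem spanning_act {n : ℕ} (g : (Mat n)ˣ) {S : Finset (Mat n)} (h : Spanning S) :
    Spanning (S.image (act g)) := by
  intro x hx
  have h1 := h (g.valᵀ *ᵥ x) (fun A hA => by
    rw [← ev_act]; exact hx _ (mem_image_of_mem _ hA))
  have h2 : (g⁻¹.valᵀ * g.valᵀ) *ᵥ x = 0 := by
    rw [← mulVec_mulVec, h1, mulVec_zero]
  rw [← transpose_mul, Units.mul_inv] at h2
  simpa using h2

section
variable {n m : ℕ} (hn : 0 < n) (R : RootData n (m+1))

theorem RootData.cell_def (S : Finset (Mat n)) :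
    (R.vor hn).toCell.cell S ↔ Spanning S ∧ ∃ g, S ⊆ R.cl g := by
  constructor
  · rintro ⟨h1, s, ⟨g, rfl⟩, h2⟩
    exact ⟨h1, g, h2⟩
  · rintro ⟨h1, g, h2⟩
    exact ⟨h1, _, ⟨g, rfl⟩, h2⟩

theorem RootData.eqData {G : Type} [Group G] (r : G →* (Mat n)ˣ) (hr : Function.Injective r)
    (ε : G →* ℤˣ) : EqData (R.vor hn).toCell ((actPerm n).comp r) ε where
  hcell g S h := by
    rw [R.cell_def] at h ⊢
    obtain ⟨h1, g', h2⟩ := h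
    refine ⟨spanning_act (r g) h1, r g * g', ?_⟩
    rw [R.cl_mul]
    exact image_subset_image h2
  hstab S h := by
    rw [R.cell_def] at h
    obtain ⟨h1, g', h2⟩ := h
    have hf := R.finite_g h1 (fun A hA => by
      obtain ⟨v, _, h⟩ := R.cl_form (h2 hA)
      exact ⟨v, h⟩) 2
    have hinj : Function.Injective (fun g => r g * g') := fun a b h => hr (mul_right_cancel h)
    refine (hf.preimage (hinj.injOn)).subset ?_
    intro g hg A hA
    have hA' : A ∈ S.image (act (r g)) := by
      have : S.image (act (r g)) = S := hg
      rwa [this]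
    obtain ⟨B, hB, rfl⟩ := mem_image.1 hA'
    have := R.phi_in (h2 hB)
    rw [← this, RootData.phi, RootData.phi, _root_.mul_inv_rev, act_mul, act_inv_act]

theorem RootData.expand_at (g : (Mat n)ˣ) (v : Fin n → ℤ) :
    sq v = ∑ b, R.L b (act g⁻¹ (sq v)) • act g (R.rho b) := by
  conv_lhs => rw [← act_act_inv g (sq v)]
  conv_lhs => rw [act_sq, R.expand]
  simp only [map_sum, map_smul]
  rw [act_sq]
  rfl

/-- the link of a codimension one cell -/
theorem RootData.link (g : (Mat n)ˣ) (i : Fin (m+1)) (hS : Spanning ((R.cl g).erase (act g (R.rho i)))) :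
    ∃ f', f' ≠ act g (R.rho i) ∧
      (R.vor hn).toCell.nb ((R.cl g).erase (act g (R.rho i))) = {act g (R.rho i), f'} ∧
      ∃ c : Fin (m+1) → ℤ, f' = - act g (R.rho i) + ∑ j ∈ univ.erase i, c j • act g (R.rho j) := by
  set f := act g (R.rho i) with hf
  set S := (R.cl g).erase f with hSd
  have hfm : f ∈ R.cl g := R.mem_cl.2 ⟨i, rfl⟩
  have hScard : S.card = m := by rw [hSd, card_erase_of_mem hfm, R.card_cl]; rfl
  have hSmem : ∀ j, j ≠ i → act g (R.rho j) ∈ S := fun j hj =>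
    mem_erase.2 ⟨fun h => hj (R.cl_inj g h), R.mem_cl.2 ⟨j, rfl⟩⟩
  have hcell : (R.vor hn).toCell.cell S := (R.cell_def hn S).2 ⟨hS, g, erase_subset _ _⟩
  have h1 : ∀ w, w ∈ (R.vor hn).toCell.nb S → w ∉ S ∧ ∃ g', insert w S = R.cl g' := by
    intro w hw
    obtain ⟨hw1, hw2⟩ := ((R.vor hn).toCell.nb_iff _ _ hcell).1 hw
    obtain ⟨_, g', h⟩ := (R.cell_def hn _).1 hw2
    refine ⟨hw1, g', eq_of_subset_of_card_le h ?_⟩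
    rw [R.card_cl, card_insert_of_notMem hw1, hScard]
  have h1' : ∀ w g', w ∉ S → insert w S = R.cl g' → w ∈ (R.vor hn).toCell.nb S := by
    intro w g' hw h
    rw [(R.vor hn).toCell.nb_iff _ _ hcell]
    refine ⟨hw, (R.cell_def hn _).2 ⟨?_, g', h.subset⟩⟩
    intro x hx
    exact hS x fun A hA => hx A (mem_insert_of_mem hA)
  set ell : Mat n → ℤ := fun w => R.L i (act g⁻¹ w) with hell
  have hellS : ∀ j, ell (act g (R.rho j)) = if i = j then 1 else 0 := by
    intro j
    simp only [hell, act_inv_act]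
    exact R.dual i j
  have hellf : ell f = 1 := by rw [hf, hellS]; simp
  have hellS0 : ∀ w ∈ S, ell w = 0 := by
    intro w hw
    obtain ⟨hw1, hw2⟩ := mem_erase.1 hw
    obtain ⟨j, rfl⟩ := R.mem_cl.1 hw2
    rw [hellS, if_neg]
    rintro rfl; exact hw1 rfl
  have hell_lin : ∀ (c : Fin (m+1) → ℤ) (A : Fin (m+1) → Mat n),
      ell (∑ b, c b • A b) = ∑ b, c b * ell (A b) := by
    intro c A
    simp only [hell, map_sum, map_smul, smul_eq_mul]
  have h2 : ∀ w, w ∈ (R.vor hn).toCell.nb S → ell w = 1 ∨ ell w = -1 := by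
    intro w hw
    obtain ⟨hw1, g', hg'⟩ := h1 w hw
    obtain ⟨v, _, hv⟩ := R.cl_form hfm
    have e := R.expand_at g' v
    rw [← hv] at e
    have e2 := congrArg ell e
    rw [hellf, hell_lin] at e2
    have hwm : w ∈ R.cl g' := by rw [← hg']; exact mem_insert_self _ _
    obtain ⟨b0, hb0⟩ := R.mem_cl.1 hwm
    rw [Finset.sum_eq_single b0, hb0] at e2
    · apply Int.isUnit_iff.1
      exact IsUnit.of_mul_eq_one (R.L b0 (act g'⁻¹ f)) (by rw [mul_comm]; exact e2.symm)
    · intro b _ hb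
      have : act g' (R.rho b) ∈ insert w S := by rw [hg']; exact R.mem_cl.2 ⟨b, rfl⟩
      rcases mem_insert.1 this with h | h
      · exact absurd (R.cl_inj g' (h.trans hb0.symm)) hb
      · rw [hellS0 _ h, mul_zero]
    · simp
  have hexp : ∀ w, w ∈ (R.vor hn).toCell.nb S →
      w = ell w • f + ∑ j ∈ univ.erase i, R.L j (act g⁻¹ w) • act g (R.rho j) := by
    intro w hw
    obtain ⟨hw1, g', hg'⟩ := h1 w hw
    obtain ⟨v, _, rfl⟩ := R.cl_form (g := g') (w := w) (by rw [← hg']; exact mem_insert_self _ _)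
    conv_lhs => rw [R.expand_at g v]
    rw [Finset.add_sum_erase univ (fun j => R.L j (act g⁻¹ (sq v)) • act g (R.rho j)) (mem_univ i)]
  have h3 : ∀ w w', w ∈ (R.vor hn).toCell.nb S → w' ∈ (R.vor hn).toCell.nb S → ell w = ell w' →
      w = w' := by
    have key : ∀ w w', w ∈ (R.vor hn).toCell.nb S → w' ∈ (R.vor hn).toCell.nb S → ell w = ell w' →
        w ≠ w' → 0 < ∑ j ∈ univ.erase i, (R.L j (act g⁻¹ w') - R.L j (act g⁻¹ w)) := by
      intro w w' hw hw' he hne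
      obtain ⟨hw1, g1, hg1⟩ := h1 w hw
      obtain ⟨hw1', g2, hg2⟩ := h1 w' hw'
      have hwm : w ∈ R.cl g1 := by rw [← hg1]; exact mem_insert_self _ _
      have hwm' : w' ∉ R.cl g1 := by
        rw [← hg1, mem_insert, not_or]; exact ⟨hne.symm, hw1'⟩
      obtain ⟨v, hv0, hv⟩ := R.cl_form (g := g2) (w := w') (by rw [← hg2]; exact mem_insert_self _ _)
      have hlt : 2 < R.phi g1 w' := by rw [hv]; exact R.phi_out hv0 (by rwa [← hv])
      have hd : w' = w + ∑ j ∈ univ.erase i, (R.L j (act g⁻¹ w') - R.L j (act g⁻¹ w)) •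
          act g (R.rho j) := by
        simp only [sub_smul, sum_sub_distrib]
        have a1 := hexp w hw
        have a2 := hexp w' hw'
        rw [he] at a1
        rw [a1] at *
        grind
      have hphi : R.phi g1 w' = 2 + ∑ j ∈ univ.erase i,
          (R.L j (act g⁻¹ w') - R.L j (act g⁻¹ w)) * 2 := by
        conv_lhs => rw [hd]
        rw [← R.phiL_eq, map_add, map_sum, R.phiL_eq, R.phi_in hwm]
        congr 1
        apply Finset.sum_congr rfl
        intro j hj
        rw [map_smul, R.phiL_eq, R.phi_in, smul_eq_mul]
        rw [← hg1]
        exact mem_insert_of_mem (hSmem j (ne_of_mem_erase hj))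
      rw [← Finset.sum_mul] at hphi
      linarith
    intro w w' hw hw' he
    by_contra hne
    have k1 := key w w' hw hw' he hne
    have k2 := key w' w hw' hw he.symm (Ne.symm hne)
    rw [Finset.sum_sub_distrib] at k1 k2
    linarith
  have hfn : f ∈ (R.vor hn).toCell.nb S :=
    h1' f g (notMem_erase _ _) (insert_erase hfm)
  obtain ⟨s', ⟨g2, rfl⟩, hsub, hfs'⟩ := (R.vor hn).flip (R.cl g) ⟨g, rfl⟩ f hfm hS
  obtain ⟨f', hf'S, hf'⟩ : ∃ f', f' ∉ S ∧ insert f' S = R.cl g2 := by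
    have hsd : (R.cl g2 \ S).card = 1 := by
      rw [card_sdiff_of_subset hsub, R.card_cl, hScard]; omega
    obtain ⟨a, ha⟩ := card_eq_one.1 hsd
    have ham : a ∈ R.cl g2 \ S := by rw [ha]; simp
    refine ⟨a, (mem_sdiff.1 ham).2, ?_⟩
    rw [insert_eq, ← ha]
    exact sdiff_union_of_subset hsub
  have hf'n := h1' f' g2 hf'S hf'
  have hne : f' ≠ f := by
    rintro rfl
    exact hfs' (by rw [← hf']; exact mem_insert_self _ _)
  have hf'ell : ell f' = -1 := by
    rcases h2 f' hf'n with h | h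
    · exact absurd (h3 _ _ hf'n hfn (h.trans hellf.symm)) hne
    · exact h
  refine ⟨f', hne, ?_, ?_⟩
  · ext w
    simp only [mem_insert, mem_singleton]
    constructor
    · intro hw
      rcases h2 w hw with h | h
      · exact Or.inl (h3 _ _ hw hfn (h.trans hellf.symm))
      · exact Or.inr (h3 _ _ hw hf'n (h.trans hf'ell.symm))
    · rintro (rfl | rfl)
      · exact hfn
      · exact hf'n
  · refine ⟨fun j => R.L j (act g⁻¹ f'), ?_⟩
    have := hexp f' hf'n
    rw [hf'ell] at this
    simpa using this
end
end SolA


namespace SolA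
open CategoryTheory Matrix Finset

section
variable {n m : ℕ} (hn : 0 < n) (R : RootData n (m+1))
  (co : Mat n →ₗ[ℤ] (Fin (m+1) → ℤ))

/-- matrix of coordinates of a list -/
def rows (l : List (Mat n)) : Matrix (Fin (m+1)) (Fin (m+1)) ℤ := fun j => co (l.getD j 0)

/-- lists enumerating a top-dimensional cell -/
def good (l : List (Mat n)) : Prop :=
  l.Nodup ∧ (R.vor hn).toCell.cell l.toFinset ∧ l.length = m + 1

open Classical in
/-- orientation cochain -/
noncomputable def ori (l : List (Mat n)) : ℚ :=
  if good hn R l then ((rows co l).det : ℚ) else 0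

theorem getD_map {l : List (Mat n)} {f : Mat n → Mat n} {j : ℕ} (h : j < l.length) :
    (l.map f).getD j 0 = f (l.getD j 0) := by
  simp [List.getD, h]

theorem getD_mem {l : List (Mat n)} {j : ℕ} (h : j < l.length) : l.getD j 0 ∈ l := by
  simp [List.getD, h]

theorem getD_inj {l : List (Mat n)} (hl : l.Nodup) {i j : ℕ} (hi : i < l.length) (hj : j < l.length)
    (h : l.getD i 0 = l.getD j 0) : i = j := by
  simp [List.getD, hi, hj] at h
  exact (List.Nodup.getElem_inj_iff hl).1 h

theorem getD_surj {l : List (Mat n)} {a : Mat n} (h : a ∈ l) :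
    ∃ i, i < l.length ∧ l.getD i 0 = a := by
  obtain ⟨i, hi, h⟩ := List.getElem_of_mem h
  exact ⟨i, hi, by simp [List.getD, hi, h]⟩

theorem getD_ofFn {k : ℕ} (f : Fin k → Mat n) (j : Fin k) : (List.ofFn f).getD j 0 = f j := by
  simp [List.getD]

theorem ori_mem : ori hn R co ∈ (R.vor hn).toCell.U (m+1) := by
  refine ⟨fun l hl => ?_, fun l a b hab ha hb => ?_⟩
  · unfold ori at hl
    by_contra h
    rw [if_neg (show ¬ good hn R l from h)] at hl
    exact hl rfl
  · unfold ori
    have hgood : good hn R (l.map (Equiv.swap a b)) ↔ good hn R l := by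
      unfold good
      rw [CellData.toFinset_map_swap ha hb, List.length_map,
        List.nodup_map_iff (Equiv.swap a b).injective]
    by_cases h : good hn R l
    · rw [if_pos h, if_pos (hgood.2 h)]
      obtain ⟨h1, h2, h3⟩ := h
      obtain ⟨p, hp, rfl⟩ := getD_surj ha
      obtain ⟨q, hq, rfl⟩ := getD_surj hb
      have hpq : p ≠ q := by rintro rfl; exact hab rfl
      rw [h3] at hp hq
      have : rows co (l.map (Equiv.swap (l.getD p 0) (l.getD q 0))) =
          (rows co l).submatrix (Equiv.swap (⟨p, hp⟩ : Fin (m+1)) ⟨q, hq⟩) id := by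
        ext j t
        simp only [rows, submatrix_apply, id]
        rw [getD_map (by omega)]
        congr 2
        by_cases hjp : j = ⟨p, hp⟩
        · subst hjp; simp
        by_cases hjq : j = ⟨q, hq⟩
        · subst hjq; simp
        rw [Equiv.swap_apply_of_ne_of_ne hjp hjq, Equiv.swap_apply_of_ne_of_ne]
        · intro h; exact hjp (Fin.ext (getD_inj h1 (by omega) (by omega) h))
        · intro h; exact hjq (Fin.ext (getD_inj h1 (by omega) (by omega) h))
      rw [this, det_permute, Equiv.Perm.sign_swap (by simpa using hpq)]
      simp
    · rw [if_neg h, if_neg (fun hh => h (hgood.1 hh))]; simp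

theorem sq_symm (v : Fin n → ℤ) : (sq v)ᵀ = sq v := by
  ext i j; simp [sq, vecMulVec_apply, mul_comm]

theorem cell_symm {S : Finset (Mat n)} (h : (R.vor hn).toCell.cell S) {A : Mat n} (hA : A ∈ S) :
    Aᵀ = A := by
  obtain ⟨_, g, hg⟩ := (R.cell_def hn S).1 h
  obtain ⟨v, _, rfl⟩ := R.cl_form (hg hA)
  exact sq_symm v

theorem ori_inv {G : Type} [Group G] (r : G →* (Mat n)ˣ) (hr : Function.Injective r) (ε : G →* ℤˣ)
    (hN : ∀ g, ∃ N : Matrix (Fin (m+1)) (Fin (m+1)) ℤ, N.det = (ε g : ℤ) ∧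
      ∀ A, Aᵀ = A → co (act (r g) A) = N *ᵥ co A) (g : G) :
    rho ((actPerm n).comp r) ε g (ori hn R co) = ori hn R co := by
  ext l
  rw [rho_apply]
  have E := R.eqData hn r hr ε
  have hiff := E.cell_iff g⁻¹ l.toFinset
  unfold ori
  have hgood : good hn R (l.map ((actPerm n).comp r g⁻¹)) ↔ good hn R l := by
    unfold good
    rw [toFinset_map, hiff, List.length_map, List.nodup_map_iff (Equiv.injective _)]
  by_cases h : good hn R l
  · rw [if_pos h, if_pos (hgood.2 h)]
    obtain ⟨h1, h2, h3⟩ := h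
    obtain ⟨N, hNd, hN⟩ := hN g⁻¹
    have : rows co (l.map ((actPerm n).comp r g⁻¹)) = rows co l * Nᵀ := by
      ext j t
      simp only [rows]
      rw [getD_map (by omega)]
      have := hN (l.getD j 0) (cell_symm hn R h2 (by
        rw [List.mem_toFinset]; exact getD_mem (by omega)))
      change co (act (r g⁻¹) _) t = _
      rw [this]
      simp only [mulVec, dotProduct, Matrix.mul_apply, transpose_apply]
      exact Finset.sum_congr rfl fun x _ => mul_comm _ _
    rw [this, det_mul, det_transpose, hNd]
    have h5 : ((ε g : ℤ) * ((ε g⁻¹ : ℤˣ) : ℤ)) = 1 := by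
      rw [← Units.val_mul, ← map_mul]; simp
    have h6 : (((ε g : ℤ) : ℚ) * (((ε g⁻¹ : ℤˣ) : ℤ) : ℚ)) = 1 := by exact_mod_cast h5
    rw [Int.cast_mul]
    calc _ = (((ε g : ℤ) : ℚ) * (((ε g⁻¹ : ℤˣ) : ℤ) : ℚ)) * ((rows co l).det : ℚ) := by ring
      _ = _ := by rw [h6, one_mul]
  · rw [if_neg h, if_neg (fun hh => h (hgood.1 hh))]; simp

theorem rows_cons (w : Mat n) (l : List (Mat n)) :
    rows co (w :: l) = (rows co (0 :: l)).updateRow 0 (co w) := by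
  ext j t
  refine Fin.cases ?_ (fun j => ?_) j
  · simp [rows]
  · rw [updateRow_ne (Fin.succ_ne_zero j)]
    simp [rows]

theorem det_rows_zero {w : Mat n} {l : List (Mat n)} (hlen : l.length = m) {c : Mat n → ℤ}
    (hw : w = ∑ x ∈ l.toFinset, c x • x) (hnd : l.Nodup) : (rows co (w :: l)).det = 0 := by
  rw [← exists_vecMul_eq_zero_iff]
  refine ⟨Fin.cons (-1) (fun j : Fin m => c (l.getD j 0)), ?_, ?_⟩
  · intro h
    have := congrFun h 0
    simp at this
  · ext t
    rw [vecMul, dotProduct, Fin.sum_univ_succ]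
    simp only [Fin.cons_zero, Fin.cons_succ, rows, Fin.val_zero, Fin.val_succ, List.getD_cons_zero,
      List.getD_cons_succ]
    have h1 : w = ∑ j : Fin m, c (l.getD j 0) • l.getD j 0 := by
      rw [hw]
      symm
      apply Finset.sum_bij (fun (j : Fin m) _ => l.getD j 0)
      · intro j _
        rw [List.mem_toFinset]; exact getD_mem (by omega)
      · intro a _ b _ h
        exact Fin.ext (getD_inj hnd (by omega) (by omega) h)
      · intro b hb
        obtain ⟨i, hi, h⟩ := getD_surj (List.mem_toFinset.1 hb)
        exact ⟨⟨i, by omega⟩, mem_univ _, h⟩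
      · intro a _; rfl
    have h2 := congrArg (fun A => co A t) h1
    simp only [map_sum, map_smul, Finset.sum_apply, Pi.smul_apply, smul_eq_mul] at h2
    rw [← h2]; simp

theorem ori_d : (R.vor hn).toCell.d (ori hn R co) = 0 := by
  ext l
  by_cases hc : (R.vor hn).toCell.cell l.toFinset
  swap
  · exact CellData.d_not _ _ hc
  rw [CellData.d_cell _ _ hc]
  by_cases hl : l.Nodup ∧ l.length = m
  swap
  · apply Finset.sum_eq_zero
    intro w hw
    unfold ori
    rw [if_neg]
    rintro ⟨h1, _, h3⟩
    exact hl ⟨(List.nodup_cons.1 h1).2, by simpa using h3⟩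
  obtain ⟨hnd, hlen⟩ := hl
  obtain ⟨hsp, g, hg⟩ := (R.cell_def hn _).1 hc
  have hcard : l.toFinset.card = m := by rw [List.toFinset_card_of_nodup hnd, hlen]
  obtain ⟨f, hfm, hfe⟩ : ∃ f ∈ R.cl g, l.toFinset = (R.cl g).erase f := by
    have hsd : (R.cl g \ l.toFinset).card = 1 := by
      rw [card_sdiff_of_subset hg, R.card_cl, hcard]; omega
    obtain ⟨a, ha⟩ := card_eq_one.1 hsd
    refine ⟨a, ?_, ?_⟩
    · have : a ∈ R.cl g \ l.toFinset := by rw [ha]; simp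
      exact (mem_sdiff.1 this).1
    · rw [← sdiff_singleton_eq_erase, ← ha, Finset.sdiff_sdiff_eq_self hg]
  obtain ⟨i, rfl⟩ := R.mem_cl.1 hfm
  obtain ⟨f', hne, hnb, c, hc'⟩ := R.link hn g i (by rwa [← hfe])
  rw [← hfe] at hnb
  have hval : ∀ w ∈ (R.vor hn).toCell.nb l.toFinset,
      ori hn R co (w :: l) = ((rows co (w :: l)).det : ℚ) := by
    intro w hw
    obtain ⟨h1, h2⟩ := (CellData.nb_iff _ _ _ hc).1 hw
    unfold ori
    rw [if_pos]
    refine ⟨List.nodup_cons.2 ⟨by simpa using h1, hnd⟩, by simpa using h2, by simp [hlen]⟩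
  rw [Finset.sum_congr rfl hval, hnb, Finset.sum_pair hne.symm]
  have hsum : (rows co ((act g (R.rho i) + f') :: l)).det = 0 := by
    apply det_rows_zero co hlen (c := fun x => ∑ j, if act g (R.rho j) = x then c j else 0) _ hnd
    rw [hc', hfe]
    rw [add_neg_cancel_left]
    symm
    apply Finset.sum_bij' (fun x _ => if h : ∃ j, act g (R.rho j) = x then h.choose else i)
      (fun j _ => act g (R.rho j))
    · intro x hx
      obtain ⟨hx1, hx2⟩ := mem_erase.1 hx
      have hx2 := R.mem_cl.1 hx2
      rw [dif_pos hx2]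
      rw [mem_erase]
      refine ⟨fun h => hx1 ?_, mem_univ _⟩
      have := hx2.choose_spec
      rw [h] at this
      exact this.symm
    · intro j hj
      exact mem_erase.2 ⟨fun h => ne_of_mem_erase hj (R.cl_inj g h), R.mem_cl.2 ⟨j, rfl⟩⟩
    · intro x hx
      obtain ⟨hx1, hx2⟩ := mem_erase.1 hx
      have hx2 := R.mem_cl.1 hx2
      rw [dif_pos hx2]
      exact hx2.choose_spec
    · intro j hj
      have hx2 : ∃ j', act g (R.rho j') = act g (R.rho j) := ⟨j, rfl⟩
      rw [dif_pos hx2]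
      exact R.cl_inj g hx2.choose_spec
    · intro x hx
      obtain ⟨hx1, hx2⟩ := mem_erase.1 hx
      have hx2 := R.mem_cl.1 hx2
      rw [dif_pos hx2]
      have := hx2.choose_spec
      rw [this]
      congr 1
      rw [Finset.sum_eq_single hx2.choose]
      · rw [if_pos this]
      · intro b _ hb
        rw [if_neg]
        intro h
        exact hb (R.cl_inj g (h.trans this.symm))
      · simp
  rw [rows_cons, map_add, det_updateRow_add, ← rows_cons, ← rows_cons] at hsum
  simp only [Pi.zero_apply]
  exact_mod_cast hsum

theorem ori_ne (hco : ∀ A, Aᵀ = A → co A = 0 → A = 0) (g : (Mat n)ˣ) :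
    ori hn R co (List.ofFn fun i => act g (R.rho i)) ≠ 0 := by
  have hset : (List.ofFn fun i => act g (R.rho i)).toFinset = R.cl g := by
    ext x; simp only [List.mem_toFinset, List.mem_ofFn, R.mem_cl]
  unfold ori
  rw [if_pos]
  · intro h
    have h : (rows co (List.ofFn fun i => act g (R.rho i))).det = 0 := by exact_mod_cast h
    rw [← exists_vecMul_eq_zero_iff] at h
    obtain ⟨v, hv, h⟩ := h
    apply hv
    have h2 : ∑ i, v i • act g (R.rho i) = 0 := by
      apply hco
      · rw [transpose_sum]
        apply Finset.sum_congr rfl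
        intro i _
        rw [transpose_smul, RootData.rho, act_sq, sq_symm]
      · rw [map_sum, ← h]
        ext t
        simp only [vecMul, dotProduct, rows, getD_ofFn, map_smul, Finset.sum_apply, Pi.smul_apply,
          smul_eq_mul]
    ext i
    have h3 := congrArg (fun A => R.L i (act g⁻¹ A)) h2
    simp only [map_sum, map_smul, act_inv_act, map_zero, smul_eq_mul] at h3
    simp only [RootData.rho, R.dual] at h3
    simpa using h3
  · refine ⟨?_, ?_, by simp⟩
    · rw [List.nodup_ofFn]; exact R.cl_inj g
    · rw [hset, R.cell_def]
      refine ⟨?_, g, subset_rfl⟩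
      have := spanning_act g R.span_rho
      convert this using 1
      rw [RootData.cl, Finset.image_image]; rfl

include hn in
theorem RootData.acyclic {G : Type} [Group G] (r : G →* (Mat n)ˣ) (hr : Function.Injective r)
    (ε : G →* ℤˣ) (hco : ∀ A, Aᵀ = A → co A = 0 → A = 0)
    (hN : ∀ g, ∃ N : Matrix (Fin (m+1)) (Fin (m+1)) ℤ, N.det = (ε g : ℤ) ∧
      ∀ A, Aᵀ = A → co (act (r g) A) = N *ᵥ co A)
    (hinv : ∀ h : (Mat n)ˣ, ∀ I : Finset (Fin (m+1)), I ≠ univ → Spanning (I.image R.rho) →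
      ∃ g, (ε g = 1 ∧ ∃ a ∈ I, ∃ b ∈ I, a ≠ b ∧
        ∀ i ∈ I, act (r g) (act h (R.rho i)) = act h (R.rho (Equiv.swap a b i))) ∨
        (ε g = -1 ∧ ∀ i ∈ I, act (r g) (act h (R.rho i)) = act h (R.rho i))) (i : ℕ) :
    Limits.IsZero (groupCohomology (Rep.trivial ℚ G ℚ) (i+1)) := by
  obtain ⟨g0, hg0⟩ : ∃ g, R.cl g = (R.vor hn).s0 := (R.vor hn).s0_mem
  have E := R.eqData hn r hr ε
  refine E.main (k := m+1) ?_ ?_ (by omega) ?_ ?_ (ori hn R co) (ori_mem hn R co) (ori_d hn R co)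
    (List.ofFn fun i => act g0 (R.rho i)) ?_ ?_ (ori_ne hn R co hco g0)
    (ori_inv hn R co r hr ε hN) i
  · intro S hS
    obtain ⟨_, g, hg⟩ := (R.cell_def hn S).1 hS
    rw [← R.card_cl g]
    exact card_le_card hg
  · change (R.vor hn).s0.card = m + 1
    rw [← hg0, R.card_cl]
  · intro h
    have h1 := ((R.cell_def hn ∅).1 h).1 (fun _ => 1) (by simp)
    have := congrFun h1 ⟨0, hn⟩
    simp at this
  · intro S hS hlt
    obtain ⟨hsp, h, hg⟩ := (R.cell_def hn S).1 hS
    set I : Finset (Fin (m+1)) := univ.filter (fun i => act h (R.rho i) ∈ S) with hI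
    have hSI : S = I.image (fun i => act h (R.rho i)) := by
      ext x
      simp only [hI, mem_image, mem_filter, mem_univ, true_and]
      constructor
      · intro hx
        obtain ⟨i, rfl⟩ := R.mem_cl.1 (hg hx)
        exact ⟨i, hx, rfl⟩
      · rintro ⟨i, hi, rfl⟩; exact hi
    have hIu : I ≠ univ := by
      intro hu
      rw [hSI, card_image_of_injective _ (R.cl_inj h), hu] at hlt
      simp at hlt
    have hIs : Spanning (I.image R.rho) := by
      have := spanning_act h⁻¹ hsp
      rw [hSI, Finset.image_image] at this
      convert this using 1
      congr 1
      ext1 i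
      exact (act_inv_act _ _).symm
    obtain ⟨g, hgg⟩ := hinv h I hIu hIs
    refine ⟨g, ?_⟩
    rcases hgg with ⟨h1, a, ha, b, hb, hab, hx⟩ | ⟨h1, hx⟩
    · refine Or.inl ⟨h1, act h (R.rho a), ?_, act h (R.rho b), ?_, ?_, ?_⟩
      · rw [hSI]; exact mem_image_of_mem _ ha
      · rw [hSI]; exact mem_image_of_mem _ hb
      · intro hh; exact hab (R.cl_inj h hh)
      · intro x hxS
        rw [hSI] at hxS
        obtain ⟨i, hi, rfl⟩ := mem_image.1 hxS
        change act (r g) _ = _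
        rw [hx i hi]
        by_cases hia : i = a
        · subst hia; simp
        by_cases hib : i = b
        · subst hib; simp
        rw [Equiv.swap_apply_of_ne_of_ne hia hib, Equiv.swap_apply_of_ne_of_ne]
        · intro hh; exact hia (R.cl_inj h hh)
        · intro hh; exact hib (R.cl_inj h hh)
    · refine Or.inr ⟨h1, ?_⟩
      intro x hxS
      rw [hSI] at hxS
      obtain ⟨i, hi, rfl⟩ := mem_image.1 hxS
      exact hx i hi
  · change _ = (R.vor hn).s0
    rw [← hg0]
    ext x; simp only [List.mem_toFinset, List.mem_ofFn, R.mem_cl]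
  · rw [List.nodup_ofFn]; exact R.cl_inj g0

end
end SolA


namespace SolA
open CategoryTheory Matrix Finset

section
variable {n k : ℕ} (p : Fin k → Fin n × Fin n)
  (hp : ∀ i j : Fin n, ∃ b, (p b = (i, j) ∨ p b = (j, i)) ∧
    ∀ b', (p b' = (i, j) ∨ p b' = (j, i)) → b' = b)
variable {K : Type} [CommRing K]

/-- symmetric elementary matrices -/
def symE (K : Type) [CommRing K] (b : Fin k) : Matrix (Fin n) (Fin n) K :=
  fun i j => if p b = (i, j) ∨ p b = (j, i) then 1 else 0

theorem symE_T (b : Fin k) : (symE p K b)ᵀ = symE p K b := by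
  ext i j
  simp only [symE, transpose_apply]
  congr 1
  exact propext or_comm

/-- the matrix of `B ↦ A B Aᵀ` on symmetric matrices -/
def symN (A : Matrix (Fin n) (Fin n) K) : Matrix (Fin k) (Fin k) K :=
  fun i b => (A * symE p K b * Aᵀ) (p i).1 (p i).2

include hp in
theorem symE_expand (B : Matrix (Fin n) (Fin n) K) (hB : Bᵀ = B) :
    B = ∑ b, B (p b).1 (p b).2 • symE p K b := by
  ext i j
  rw [Matrix.sum_apply]
  simp only [Matrix.smul_apply, smul_eq_mul]
  obtain ⟨b, hb, hu⟩ := hp i j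
  rw [Finset.sum_eq_single b]
  · rw [symE, if_pos hb, mul_one]
    rcases hb with hb | hb
    · rw [hb]
    · rw [hb]; exact (congrFun (congrFun hB i) j).symm
  · intro b' _ hb'
    rw [symE, if_neg (fun h => hb' (hu b' h)), mul_zero]
  · simp

include hp in
theorem symN_mulVec (A B : Matrix (Fin n) (Fin n) K) (hB : Bᵀ = B) (i : Fin k) :
    (A * B * Aᵀ) (p i).1 (p i).2 = (symN p A *ᵥ fun b => B (p b).1 (p b).2) i := by
  conv_lhs => rw [symE_expand p hp B hB]
  rw [Finset.mul_sum, Finset.sum_mul, Matrix.sum_apply, mulVec, dotProduct]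
  refine Finset.sum_congr rfl fun b _ => ?_
  rw [Matrix.mul_smul, Matrix.smul_mul, Matrix.smul_apply, smul_eq_mul, mul_comm]
  rfl

include hp in
theorem symN_mul (A B : Matrix (Fin n) (Fin n) K) : symN p (A * B) = symN p A * symN p B := by
  ext i b
  have h := symN_mulVec p hp A (B * symE p K b * Bᵀ)
    (by rw [transpose_mul, transpose_mul, transpose_transpose, symE_T, Matrix.mul_assoc]) i
  have h2 : symN p (A * B) i b = (A * (B * symE p K b * Bᵀ) * Aᵀ) (p i).1 (p i).2 := by
    unfold symN
    rw [transpose_mul]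
    simp only [Matrix.mul_assoc]
  rw [h2, h]
  rfl

theorem symE_map {L : Type} [CommRing L] (f : K →+* L) (b : Fin k) :
    (symE p K b).map f = symE p L b := by
  ext i j
  simp only [symE, map_apply]
  split_ifs <;> simp

theorem symN_map {L : Type} [CommRing L] (f : K →+* L) (A : Matrix (Fin n) (Fin n) K) :
    symN p (A.map f) = (symN p A).map f := by
  ext i b
  simp only [symN, map_apply]
  rw [← symE_map p f, ← Matrix.map_mul, ← transpose_map, ← Matrix.map_mul, map_apply]

include hp in
theorem symN_diag (d : Fin n → K) :
    symN p (diagonal d) = diagonal (fun b => d (p b).1 * d (p b).2) := by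
  ext i b
  simp only [symN, diagonal_transpose]
  rw [mul_diagonal, diagonal_mul]
  by_cases h : i = b
  · subst h
    rw [diagonal_apply_eq, symE, if_pos (Or.inl rfl)]; ring
  · rw [diagonal_apply_ne _ h, symE, if_neg]
    · ring
    · intro h'
      apply h
      obtain ⟨c, hc, hu⟩ := hp (p i).1 (p i).2
      rw [hu b h', hu i (Or.inl rfl)]

include hp in
theorem symN_one : symN p (1 : Matrix (Fin n) (Fin n) K) = 1 := by
  rw [← diagonal_one, symN_diag p hp]
  simp

/-- coordinate map -/
def symCo : Mat n →ₗ[ℤ] (Fin k → ℤ) := LinearMap.pi fun b => ent (p b).1 (p b).2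

include hp in
theorem symCo_zero (A : Mat n) (hA : Aᵀ = A) (h : symCo p A = 0) : A = 0 := by
  rw [symE_expand p hp A hA]
  refine Finset.sum_eq_zero fun b _ => ?_
  have : A (p b).1 (p b).2 = 0 := congrFun h b
  rw [this, zero_smul]

include hp in
theorem symCo_act (g : (Mat n)ˣ) (A : Mat n) (hA : Aᵀ = A) :
    symCo p (act g A) = symN p g.val *ᵥ symCo p A := by
  ext i
  exact symN_mulVec p hp g.val A hA i

theorem transv_comm (i j l : Fin n) (hij : i ≠ j) (hil : i ≠ l) (hjl : j ≠ l) (c : K) :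
    transvection i l c * transvection l j (1 : K) =
      transvection i j c * (transvection l j 1 * transvection i l c) := by
  simp only [transvection, mul_add, add_mul, mul_one, one_mul, single_mul_single_same]
  rw [single_mul_single_of_ne _ _ _ _ hij.symm, single_mul_single_of_ne _ _ _ _ hjl]
  simp [hjl, hij.symm]
  abel
end

/-- coordinates, `n = 3` -/
def p3 : Fin 6 → Fin 3 × Fin 3 := ![(0, 0), (1, 1), (2, 2), (0, 1), (0, 2), (1, 2)]

theorem hp3 : ∀ i j : Fin 3, ∃ b, (p3 b = (i, j) ∨ p3 b = (j, i)) ∧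
    ∀ b', (p3 b' = (i, j) ∨ p3 b' = (j, i)) → b' = b := by decide +kernel

/-- coordinates, `n = 2` -/
def p2 : Fin 3 → Fin 2 × Fin 2 := ![(0, 0), (1, 1), (0, 1)]

theorem hp2 : ∀ i j : Fin 2, ∃ b, (p2 b = (i, j) ∨ p2 b = (j, i)) ∧
    ∀ b', (p2 b' = (i, j) ∨ p2 b' = (j, i)) → b' = b := by decide +kernel

theorem det_transv (i j : Fin 3) (hij : i ≠ j) (c : ℚ) :
    (symN p3 (transvection i j c)).det = 1 := by
  obtain ⟨l, hil, hjl⟩ : ∃ l, i ≠ l ∧ j ≠ l := by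
    revert i j; decide
  have hne : ∀ (a b : Fin 3) (x : ℚ), a ≠ b → (symN p3 (transvection a b x)).det ≠ 0 := by
    intro a b x hab h
    have h1 : (symN p3 (transvection a b x * transvection a b (-x))).det = 1 := by
      rw [transvection_mul_transvection_same _ _ hab, add_neg_cancel, transvection_zero,
        symN_one p3 hp3, det_one]
    rw [symN_mul p3 hp3, det_mul, h, zero_mul] at h1
    exact zero_ne_one h1
  have h := congrArg (fun A => (symN p3 A).det) (transv_comm i j l hij hil hjl c)
  simp only [symN_mul p3 hp3, det_mul] at h
  have h1 := hne i l c hil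
  have h2 := hne l j 1 hjl.symm
  have h3 : ((symN p3 (transvection i j c)).det - 1) *
    ((symN p3 (transvection l j (1:ℚ))).det * (symN p3 (transvection i l c)).det) = 0 := by
    linear_combination -h
  rcases mul_eq_zero.1 h3 with h4 | h4
  · linarith
  · exact absurd h4 (mul_ne_zero h2 h1)

theorem det_symN3Q (A : Matrix (Fin 3) (Fin 3) ℚ) (hA : A.det ≠ 0) :
    (symN p3 A).det = A.det ^ 4 := by
  refine diagonal_transvection_induction_of_det_ne_zero
    (fun A => (symN p3 A).det = A.det ^ 4) A hA ?_ ?_ ?_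
  · intro D _
    rw [symN_diag p3 hp3, det_diagonal, det_diagonal]
    simp [Fin.prod_univ_succ, p3]
    ring
  · intro t
    rw [t.det, TransvectionStruct.toMatrix, det_transv _ _ t.hij, one_pow]
  · intro A B _ _ h1 h2
    rw [symN_mul p3 hp3, det_mul, det_mul, h1, h2, mul_pow]

theorem det_symN3 (A : Mat 3) (hA : A.det = 1) : (symN p3 A).det = 1 := by
  have h := det_symN3Q (A.map (Int.castRingHom ℚ)) (by
    have := (Int.castRingHom ℚ).map_det A
    rw [RingHom.mapMatrix_apply] at this
    rw [← this, hA]; simp)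
  have h1 := (Int.castRingHom ℚ).map_det A
  have h2 := (Int.castRingHom ℚ).map_det (symN p3 A)
  rw [RingHom.mapMatrix_apply] at h1 h2
  rw [symN_map, ← h1, ← h2, hA] at h
  simpa using h

theorem det_symN2 (A : Mat 2) : (symN p2 A).det = A.det ^ 3 := by
  rw [det_fin_three, det_fin_two]
  simp only [symN, Matrix.mul_apply, Fin.sum_univ_two, symE, p2, transpose_apply]
  simp
  ring

/-- candidate stabilizing matrices -/
def gam3 : Fin 10 → Mat 3 :=
  ![!![1, 0, 0; 0, -1, 0; -1, 0, -1], !![1, 0, 0; -1, -1, 0; 0, 0, -1],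
    !![-1, 0, 0; 1, 0, 1; 1, 1, 0], !![-1, 0, 0; 0, 0, -1; 0, -1, 0],
    !![1, 0, 0; -1, -1, 0; -1, 0, -1], !![0, 1, 1; 1, 0, 1; 0, 0, -1],
    !![0, 1, 1; 0, -1, 0; 1, 1, 0], !![1, 1, 1; 0, -1, 0; 0, 0, -1],
    !![-1, -1, -1; 0, 0, 1; 0, 1, 0], !![-1, 0, -1; 0, -1, 0; 0, 0, 1]]

theorem gam3_det : ∀ i, (gam3 i).det = 1 := by decide +kernel

/-- candidate kernel vectors -/
def xs3 : List (Fin 3 → ℤ) :=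
  [![1, 0, 0], ![0, 1, 0], ![0, 0, 1], ![1, 1, 0], ![1, 0, 1], ![0, 1, 1], ![1, 1, 1]]

theorem comb3 : ∀ I : Finset (Fin 6), I ≠ univ →
    (∃ x ∈ xs3, ∀ i ∈ I, r3 i ⬝ᵥ x = 0) ∨
    ∃ t, ∃ a ∈ I, ∃ b ∈ I, a ≠ b ∧ ∀ i ∈ I,
      gam3 t * sq (r3 i) * (gam3 t)ᵀ = sq (r3 (Equiv.swap a b i)) := by
  decide +kernel

theorem acyc3 {G : Type} [Group G] (r : G →* (Mat 3)ˣ) (hr : Function.Injective r)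
    (hdet : ∀ g, (r g).val.det = 1) (hsurj : ∀ u : (Mat 3)ˣ, u.val.det = 1 → ∃ g, r g = u)
    (i : ℕ) : Limits.IsZero (groupCohomology (Rep.trivial ℚ G ℚ) (i+1)) := by
  refine RootData.acyclic (by norm_num) R3 (symCo p3) r hr 1 (symCo_zero p3 hp3) ?_ ?_ i
  · intro g
    exact ⟨symN p3 (r g).val, by simp [det_symN3 _ (hdet g)], symCo_act p3 hp3 (r g)⟩
  · intro h I hI hS
    rcases comb3 I hI with ⟨x, hx, hx2⟩ | ⟨t, a, ha, b, hb, hab, ht⟩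
    · exfalso
      have hx0 : x ≠ 0 := by
        clear hx2
        revert x; unfold xs3; decide +kernel
      apply hx0
      apply hS
      intro A hA
      obtain ⟨i, hi, rfl⟩ := mem_image.1 hA
      have : R3.rho i = sq (r3 i) := rfl
      rw [this, ev_sq, hx2 i hi]
      rfl
    · set u : (Mat 3)ˣ := nonsingInvUnit (gam3 t) (by rw [gam3_det]; exact isUnit_one) with hu
      have huv : u.val = gam3 t := rfl
      obtain ⟨g, hg⟩ := hsurj (h * u * h⁻¹) (by
        have h1 : (h.val * h⁻¹.val).det = 1 := by rw [Units.mul_inv, det_one]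
        rw [det_mul] at h1
        rw [Units.val_mul, Units.val_mul, det_mul, det_mul, huv, gam3_det, mul_one, h1])
      refine ⟨g, Or.inl ⟨rfl, a, ha, b, hb, hab, fun i hi => ?_⟩⟩
      rw [hg, act_mul, act_mul, act_inv_act]
      congr 1
      exact ht i hi

/-- reflections -/
def gam2 : Fin 3 → Mat 2 := ![!![1, 0; 0, -1], !![1, 2; 0, -1], !![-1, 0; 2, 1]]

/-- the reflections are congruent to `1` modulo `2` -/
def gam2h : Fin 3 → Mat 2 := ![!![0, 0; 0, -1], !![0, 1; 0, -1], !![-1, 0; 1, 0]]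

theorem gam2_sq : ∀ t, gam2 t * gam2 t = 1 := by decide +kernel

theorem gam2_det : ∀ t, (gam2 t).det = -1 := by decide +kernel

theorem gam2_mod : ∀ t, gam2 t = 1 + (gam2h t + gam2h t) := by decide +kernel

theorem comb2 : ∀ I : Finset (Fin 3), I ≠ univ →
    ∃ t, ∀ i ∈ I, gam2 t * sq (r2 i) * (gam2 t)ᵀ = sq (r2 i) := by
  decide +kernel

theorem acyc2 {G : Type} [Group G] (r : G →* (Mat 2)ˣ) (hr : Function.Injective r)
    (hsurj : ∀ u : (Mat 2)ˣ, (∃ B : Mat 2, u.val = 1 + (B + B)) → ∃ g, r g = u)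
    (i : ℕ) : Limits.IsZero (groupCohomology (Rep.trivial ℚ G ℚ) (i+1)) := by
  let ε : G →* ℤˣ := (Units.map (detMonoidHom : Mat 2 →* ℤ)).comp r
  have hε : ∀ g, ((ε g : ℤˣ) : ℤ) = (r g).val.det := fun g => rfl
  refine RootData.acyclic (by norm_num) R2 (symCo p2) r hr ε (symCo_zero p2 hp2) ?_ ?_ i
  · intro g
    refine ⟨symN p2 (r g).val, ?_, symCo_act p2 hp2 (r g)⟩
    rw [det_symN2, ← hε]
    rcases Int.units_eq_one_or (ε g) with h | h <;> rw [h] <;> simp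
  · intro h I hI _
    obtain ⟨t, ht⟩ := comb2 I hI
    let u : (Mat 2)ˣ := ⟨gam2 t, gam2 t, gam2_sq t, gam2_sq t⟩
    have huv : u.val = gam2 t := rfl
    obtain ⟨g, hg⟩ := hsurj (h * u * h⁻¹) ⟨h.val * gam2h t * h⁻¹.val, by
      rw [Units.val_mul, Units.val_mul, huv, gam2_mod, mul_add, mul_one, add_mul, Units.mul_inv,
        mul_add, add_mul]⟩
    refine ⟨g, Or.inr ⟨?_, fun i hi => ?_⟩⟩
    · apply Units.ext
      rw [hε, hg]
      have h1 : (h.val * h⁻¹.val).det = 1 := by rw [Units.mul_inv, det_one]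
      rw [det_mul] at h1
      rw [Units.val_mul, Units.val_mul, det_mul, det_mul, huv, gam2_det]
      simp only [Units.val_neg, Units.val_one]
      linear_combination -h1
    · rw [hg, act_mul, act_mul, act_inv_act]
      congr 1
      exact ht i hi

end SolA


namespace SolA
open CategoryTheory Matrix Finset

/-- `SL_3(ℤ)` -/
abbrev SL3 := Matrix.SpecialLinearGroup (Fin 3) ℤ

theorem gcd_split (a b : ℤ) : ∃ g a' b' x y : ℤ, a = g * a' ∧ b = g * b' ∧ a' * x + b' * y = 1 := by
  by_cases h : a = 0 ∧ b = 0
  · exact ⟨0, 1, 0, 1, 0, by simp [h.1], by simp [h.2], by norm_num⟩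
  · have hg : (Int.gcd a b : ℤ) ≠ 0 := by
      intro h0
      apply h
      have : Int.gcd a b = 0 := by exact_mod_cast h0
      exact Int.gcd_eq_zero_iff.1 this
    obtain ⟨a', ha⟩ := Int.gcd_dvd_left a b
    obtain ⟨b', hb⟩ := Int.gcd_dvd_right a b
    refine ⟨Int.gcd a b, a', b', Int.gcdA a b, Int.gcdB a b, ha, hb, ?_⟩
    have h1 := Int.gcd_eq_gcd_ab a b
    apply mul_left_cancel₀ hg
    have : a * Int.gcdA a b + b * Int.gcdB a b =
      Int.gcd a b * (a' * Int.gcdA a b + b' * Int.gcdB a b) := by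
      conv_lhs => rw [show a * Int.gcdA a b = (Int.gcd a b * a') * Int.gcdA a b from
        congrArg (· * Int.gcdA a b) ha, show b * Int.gcdB a b = (Int.gcd a b * b') * Int.gcdB a b from
        congrArg (· * Int.gcdB a b) hb]
      ring
    rw [← this, mul_one]; exact h1.symm

theorem exists_P (h : SL3) (hh : h * h = 1) :
    ∃ P : SL3, (P * h * P⁻¹).val 2 0 = 0 ∧ (P * h * P⁻¹).val 2 1 = 0 ∧ (P * h * P⁻¹).val 2 2 = 1 := by
  have hv : h.val * h.val = 1 := congrArg Subtype.val hh
  have hd : (h.val - 1).det = 0 := by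
    have h1 : h.val * (h.val - 1) = -(h.val - 1) := by
      rw [mul_sub, hv, mul_one, neg_sub]
    have h2 := congrArg Matrix.det h1
    rw [det_mul, h.prop, det_neg] at h2
    simp at h2
    omega
  obtain ⟨l, hl0, hl⟩ := exists_vecMul_eq_zero_iff.2 hd
  obtain ⟨g, a, b, x, y, ha, hb, hxy⟩ := gcd_split (l 0) (l 1)
  obtain ⟨G, g', c, u, w, hg, hc, huw⟩ := gcd_split g (l 2)
  have hG : G ≠ 0 := by
    rintro rfl
    apply hl0
    rw [zero_mul] at hg hc
    rw [hg, zero_mul] at ha hb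
    ext i; fin_cases i
    · exact ha
    · exact hb
    · exact hc
  let P0 : Mat 3 := !![-y, x, 0; -w * a, -w * b, u; g' * a, g' * b, c]
  have hP0 : P0.det = 1 := by
    simp only [P0, det_fin_three]
    simp
    linear_combination (g' * u + c * w) * hxy + huw
  let P : SL3 := ⟨P0, hP0⟩
  have hlG : l = G • P0 2 := by
    ext i; fin_cases i
    · simp [P0, ha, hg]; ring
    · simp [P0, hb, hg]; ring
    · simp [P0, hc]
  have hrow : P0 2 ᵥ* h.val = P0 2 := by
    rw [vecMul_sub, vecMul_one, sub_eq_zero, hlG, smul_vecMul] at hl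
    exact smul_right_injective _ hG hl
  have hPP : P.val * P⁻¹.val = 1 := congrArg Subtype.val (mul_inv_cancel P)
  have key : ∀ j, (P * h * P⁻¹).val 2 j = (1 : Mat 3) 2 j := by
    intro j
    have e1 : (P * h * P⁻¹).val = P0 * h.val * P⁻¹.val := rfl
    have e2 : (P0 * h.val * P⁻¹.val) 2 = (P0 2 ᵥ* h.val) ᵥ* P⁻¹.val := by
      rw [mul_apply_eq_vecMul, mul_apply_eq_vecMul]
    rw [e1, e2, hrow, ← mul_apply_eq_vecMul]
    exact congrFun (congrFun hPP 2) j
  refine ⟨P, ?_, ?_, ?_⟩ <;> rw [key] <;> decide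

/-- the shape of an involution -/
theorem invol_shape (M : Mat 3) (hd : M.det = 1) (hM : M * M = 1) (hne : M ≠ 1)
    (h0 : M 2 0 = 0) (h1 : M 2 1 = 0) (h2 : M 2 2 = 1) :
    M = !![-1, 0, M 0 2; 0, -1, M 1 2; 0, 0, 1] := by
  have e : ∀ i j, M i 0 * M 0 j + M i 1 * M 1 j + M i 2 * M 2 j = (1 : Mat 3) i j := by
    intro i j
    rw [← hM, Matrix.mul_apply, Fin.sum_univ_three]
  have e00 := e 0 0
  have e01 := e 0 1
  have e10 := e 1 0
  have e11 := e 1 1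
  have e02 := e 0 2
  have e12 := e 1 2
  rw [det_fin_three] at hd
  simp [h0, h1, h2] at e00 e01 e10 e11 e02 e12 hd
  have ht : M 0 0 + M 1 1 ≠ 0 := by
    intro ht
    have : M 1 1 = - M 0 0 := by linarith
    rw [this] at hd
    linarith
  have hb : M 0 1 = 0 := by
    apply (mul_eq_zero.1 (show (M 0 0 + M 1 1) * M 0 1 = 0 by linarith)).resolve_left ht
  have hc : M 1 0 = 0 := by
    apply (mul_eq_zero.1 (show (M 0 0 + M 1 1) * M 1 0 = 0 by linarith)).resolve_left ht
  rw [hb] at e00 hd e02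
  rw [hc] at e11 e12
  have had : M 1 1 = M 0 0 := by
    have : M 0 0 * M 0 0 = 1 := by linarith
    have h3 : M 0 0 * M 1 1 = 1 := by linarith
    calc M 1 1 = (M 0 0 * M 0 0) * M 1 1 := by rw [this, one_mul]
      _ = M 0 0 * (M 0 0 * M 1 1) := by ring
      _ = _ := by rw [h3, mul_one]
  rcases mul_self_eq_one_iff.1 (show M 0 0 * M 0 0 = 1 by linarith) with ha | ha
  · exfalso
    apply hne
    rw [had, ha] at e12
    rw [ha] at e02
    have hv0 : M 0 2 = 0 := by linarith
    have hv1 : M 1 2 = 0 := by linarith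
    ext i j
    fin_cases i <;> fin_cases j <;> simp [ha, had, hb, hc, hv0, hv1, h0, h1, h2]
  · ext i j
    fin_cases i <;> fin_cases j <;> simp [ha, had, hb, hc, h0, h1, h2]

/-- upper left block -/
def blk (M : Mat 3) : Mat 2 := !![M 0 0, M 0 1; M 1 0, M 1 1]

theorem blk_mul (M N : Mat 3) (h0 : N 2 0 = 0) (h1 : N 2 1 = 0) : blk (M * N) = blk M * blk N := by
  ext i j
  fin_cases i <;> fin_cases j <;>
    simp [blk, Matrix.mul_apply, Fin.sum_univ_succ, h0, h1]

theorem comm_shape (M : Mat 3) (v w : ℤ)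
    (h : M * !![-1, 0, v; 0, -1, w; 0, 0, 1] = !![-1, 0, v; 0, -1, w; 0, 0, 1] * M) :
    M 2 0 = 0 ∧ M 2 1 = 0 ∧ 2 * M 0 2 = v * M 2 2 - (M 0 0 * v + M 0 1 * w) ∧
      2 * M 1 2 = w * M 2 2 - (M 1 0 * v + M 1 1 * w) := by
  have e := fun i j => congrFun (congrFun h i) j
  simp only [Matrix.mul_apply, Fin.sum_univ_three] at e
  have e20 := e 2 0
  have e21 := e 2 1
  have e02 := e 0 2
  have e12 := e 1 2
  simp at e20 e21 e02 e12
  refine ⟨by omega, by omega, by linarith, by linarith⟩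

theorem comm_blk_one (M : Mat 3) (hd : M.det = 1) (v w : ℤ)
    (h : M * !![-1, 0, v; 0, -1, w; 0, 0, 1] = !![-1, 0, v; 0, -1, w; 0, 0, 1] * M)
    (hb : blk M = 1) : M = 1 := by
  obtain ⟨h0, h1, h2, h3⟩ := comm_shape M v w h
  have e := fun i j => congrFun (congrFun hb i) j
  have e00 := e 0 0
  have e01 := e 0 1
  have e10 := e 1 0
  have e11 := e 1 1
  simp [blk] at e00 e01 e10 e11
  rw [det_fin_three] at hd
  simp [h0, h1, e00, e01, e10, e11] at hd
  rw [hd, e00, e01] at h2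
  rw [hd, e10, e11] at h3
  have h4 : M 0 2 = 0 := by linarith
  have h5 : M 1 2 = 0 := by linarith
  ext i j
  fin_cases i <;> fin_cases j <;> simp [h0, h1, e00, e01, e10, e11, hd, h4, h5]

theorem exists_lift (u : (Mat 2)ˣ) (B : Mat 2) (hu : u.val = 1 + (B + B)) (v w : ℤ) :
    ∃ M : SL3, M.val * !![-1, 0, v; 0, -1, w; 0, 0, 1] = !![-1, 0, v; 0, -1, w; 0, 0, 1] * M.val ∧
      blk M.val = u.val := by
  obtain ⟨d, hd, hdet⟩ : ∃ d : ℤ, (1 + (d + d)) * (1 + (d + d)) = 1 ∧ u.val.det = 1 + (d + d) := by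
    have := (Matrix.isUnit_iff_isUnit_det _).1 u.isUnit
    rcases Int.isUnit_iff.1 this with h | h
    · exact ⟨0, by norm_num, by rw [h]; norm_num⟩
    · exact ⟨-1, by norm_num, by rw [h]; norm_num⟩
  have e := fun i j => congrFun (congrFun hu i) j
  have e00 := e 0 0
  have e01 := e 0 1
  have e10 := e 1 0
  have e11 := e 1 1
  simp at e00 e01 e10 e11
  rw [det_fin_two] at hdet
  let M0 : Mat 3 := !![u.val 0 0, u.val 0 1, d * v - (B 0 0 * v + B 0 1 * w);
    u.val 1 0, u.val 1 1, d * w - (B 1 0 * v + B 1 1 * w); 0, 0, 1 + (d + d)]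
  have hM0 : M0.det = 1 := by
    simp only [M0, det_fin_three]
    simp
    linear_combination hd + (1 + (d+d)) * hdet
  refine ⟨⟨M0, hM0⟩, ?_, ?_⟩
  · change M0 * _ = _ * M0
    ext i j
    fin_cases i <;> fin_cases j <;>
      simp [M0, Matrix.mul_apply, Fin.sum_univ_succ]
    · rw [e00, e01]; ring
    · rw [e10, e11]; ring
  · ext i j
    fin_cases i <;> fin_cases j <;> simp [blk, M0]

theorem bound4 (s t y e : ℤ) (hs : s = 1 ∨ s = -1) (he : e = 4 ∨ e = -4) (h : t * t - s * (y * y) = e) :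
    t ∈ Finset.Icc (-4 : ℤ) 4 ∧ y ∈ Finset.Icc (-4 : ℤ) 4 := by
  rw [Finset.mem_Icc, Finset.mem_Icc]
  rcases hs with rfl | rfl
  · have h1 : (t - y) * (t + y) = e := by linarith
    have hd1 : (t - y) ∣ 4 := by
      rcases he with rfl | rfl
      · exact ⟨_, h1.symm⟩
      · exact ⟨-(t + y), by linarith⟩
    have hd2 : (t + y) ∣ 4 := by
      rcases he with rfl | rfl
      · exact ⟨t - y, by linarith⟩
      · exact ⟨-(t - y), by linarith⟩
    have b1 := Int.le_of_dvd (by norm_num) hd1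
    have b2 := Int.le_of_dvd (by norm_num) hd2
    have b3 := Int.le_of_dvd (by norm_num) ((neg_dvd).2 hd1)
    have b4 := Int.le_of_dvd (by norm_num) ((neg_dvd).2 hd2)
    omega
  · have h2 : t * t + y * y ≤ 4 := by rcases he with rfl | rfl <;> linarith
    refine ⟨⟨?_, ?_⟩, ?_, ?_⟩ <;> nlinarith [mul_self_nonneg t, mul_self_nonneg y]

theorem finite_cent {G : Type} [Group G] (r : G →* (Mat 2)ˣ) (hr : Function.Injective r)
    (B : Mat 2) (hB1 : B ≠ 1) (hB2 : B ≠ -1) (s : ℤ) (hs : s = 1 ∨ s = -1) (hB : B * B = s • 1)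
    (hc : ∀ g, (r g).val * B = B * (r g).val) : Finite G := by
  have e := fun i j => congrFun (congrFun hB i) j
  simp only [Matrix.mul_apply, Fin.sum_univ_two, Matrix.smul_apply, smul_eq_mul] at e
  have e00 := e 0 0
  have e01 := e 0 1
  have e10 := e 1 0
  have e11 := e 1 1
  simp at e00 e01 e10 e11
  have ht : B 1 1 = - B 0 0 := by
    by_contra hne
    have hne : B 0 0 + B 1 1 ≠ 0 := fun h => hne (by linarith)
    have hb : B 0 1 = 0 :=
      (mul_eq_zero.1 (show (B 0 0 + B 1 1) * B 0 1 = 0 by linarith)).resolve_left hne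
    have hc : B 1 0 = 0 :=
      (mul_eq_zero.1 (show (B 0 0 + B 1 1) * B 1 0 = 0 by linarith)).resolve_left hne
    rw [hb] at e00
    rw [hc] at e11
    have had : B 0 0 = B 1 1 := by
      have : (B 0 0 + B 1 1) * (B 0 0 - B 1 1) = 0 := by linarith
      linarith [(mul_eq_zero.1 this).resolve_left hne]
    rcases hs with rfl | rfl
    · rcases mul_self_eq_one_iff.1 (show B 0 0 * B 0 0 = 1 by linarith) with ha | ha
      · apply hB1
        ext i j; fin_cases i <;> fin_cases j <;> simp [hb, hc, ← had, ha]
      · apply hB2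
        ext i j; fin_cases i <;> fin_cases j <;> simp [hb, hc, ← had, ha]
    · nlinarith [mul_self_nonneg (B 0 0)]
  have hss : s * s = 1 := by rcases hs with rfl | rfl <;> norm_num
  let T : G → ℤ := fun g => (r g).val 0 0 + (r g).val 1 1
  let Y : G → ℤ := fun g => s * (((r g).val 0 0 - (r g).val 1 1) * B 0 0 + 2 * (r g).val 0 1 * B 1 0)
  have hY : ∀ g, Y g * B 0 0 = (r g).val 0 0 - (r g).val 1 1 ∧ Y g * B 0 1 = 2 * (r g).val 0 1 ∧
      Y g * B 1 0 = 2 * (r g).val 1 0 := by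
    intro g
    have c := fun i j => congrFun (congrFun (hc g) i) j
    simp only [Matrix.mul_apply, Fin.sum_univ_two] at c
    have c00 := c 0 0
    have c01 := c 0 1
    have c10 := c 1 0
    rw [ht] at c01 c10
    simp only [Y]
    generalize (r g).val 0 0 = p at *
    generalize (r g).val 0 1 = q at *
    generalize (r g).val 1 0 = t at *
    generalize (r g).val 1 1 = z at *
    generalize B 0 0 = a at *
    generalize B 0 1 = b at *
    generalize B 1 0 = c at *
    refine ⟨?_, ?_, ?_⟩
    · linear_combination s * (p - z) * e00 + (p - z) * hss - s * c * c01
    · linear_combination s * a * c01 + 2 * s * q * e00 + 2 * q * hss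
    · linear_combination s * a * (-c10) + 2 * s * t * e00 + 2 * t * hss + 2 * s * c * c00
  have hTY : ∀ g, T g ∈ Finset.Icc (-4 : ℤ) 4 ∧ Y g ∈ Finset.Icc (-4 : ℤ) 4 := by
    intro g
    obtain ⟨y1, y2, y3⟩ := hY g
    apply bound4 s (T g) (Y g) (4 * (r g).val.det) hs
    · have := (Matrix.isUnit_iff_isUnit_det _).1 (r g).isUnit
      rcases Int.isUnit_iff.1 this with h | h <;> rw [h] <;> norm_num
    · rw [det_fin_two]
      have h4 : s * (Y g * Y g) = ((r g).val 0 0 - (r g).val 1 1) ^ 2 +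
          (2 * (r g).val 0 1) * (2 * (r g).val 1 0) := by
        rw [← y1, ← y2, ← y3]
        linear_combination - (Y g) ^ 2 * e00
      rw [h4]
      simp only [T]
      ring
  let F : G → (Finset.Icc (-4 : ℤ) 4) × (Finset.Icc (-4 : ℤ) 4) :=
    fun g => (⟨T g, (hTY g).1⟩, ⟨Y g, (hTY g).2⟩)
  apply Finite.of_injective F
  intro g g' hgg
  have hT : T g = T g' := congrArg (fun x => x.1.val) hgg
  have hYY : Y g = Y g' := congrArg (fun x => x.2.val) hgg
  obtain ⟨y1, y2, y3⟩ := hY g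
  obtain ⟨z1, z2, z3⟩ := hY g'
  rw [hYY] at y1 y2 y3
  simp only [T] at hT
  apply hr
  apply Units.ext
  ext i j
  fin_cases i <;> fin_cases j
  · change (r g).val 0 0 = (r g').val 0 0; linarith
  · change (r g).val 0 1 = (r g').val 0 1; linarith
  · change (r g).val 1 0 = (r g').val 1 0; linarith
  · change (r g).val 1 1 = (r g').val 1 1; linarith

end SolA


namespace SolA
open CategoryTheory Matrix Finset

/-- the representation on the upper left block -/
def blkHom {G : Type} [Group G] (φ : G →* SL3) (v w : ℤ)
    (hφ : ∀ g, (φ g).val * !![-1, 0, v; 0, -1, w; 0, 0, 1] =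
      !![-1, 0, v; 0, -1, w; 0, 0, 1] * (φ g).val) : G →* (Mat 2)ˣ :=
  MonoidHom.toHomUnits
    { toFun := fun g => blk (φ g).val
      map_one' := by
        rw [map_one]
        ext i j; fin_cases i <;> fin_cases j <;> simp [blk]
      map_mul' := fun a b => by
        obtain ⟨h0, h1, _⟩ := comm_shape _ v w (hφ b)
        rw [map_mul]
        exact blk_mul _ _ h0 h1 }

theorem acyc_main (H : Subgroup SL3) (hfin : Finite H) (hab : ∀ a b : H, a * b = b * a)
    (h2 : ∃ k : ℕ, Nat.card H = 2 ^ k) (i : ℕ) :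
    Limits.IsZero (groupCohomology
      (Rep.trivial ℚ (Subgroup.centralizer (H : Set SL3)) ℚ) (i+1)) := by
  obtain ⟨k, hk⟩ := h2
  rcases Nat.eq_zero_or_pos k with rfl | hkpos
  · -- trivial subgroup
    have hH : ∀ x ∈ H, x = 1 := by
      have : Subsingleton H := (Nat.card_eq_one_iff_unique.1 (by simpa using hk)).1
      intro x hx
      exact congrArg Subtype.val (Subsingleton.elim (⟨x, hx⟩ : H) 1)
    let r : Subgroup.centralizer (H : Set SL3) →* (Mat 3)ˣ :=
      MonoidHom.toHomUnits
        { toFun := fun g => g.val.val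
          map_one' := rfl
          map_mul' := fun a b => rfl }
    refine acyc3 r ?_ ?_ ?_ i
    · intro a b hab
      exact Subtype.ext (Subtype.ext (congrArg Units.val hab))
    · intro g
      exact g.val.prop
    · intro u hu
      let U : SL3 := ⟨u.val, hu⟩
      refine ⟨⟨U, ?_⟩, ?_⟩
      · rw [Subgroup.mem_centralizer_iff]
        intro x hx
        rw [hH x hx, one_mul, mul_one]
      · exact Units.ext rfl
  · have : Fact (Nat.Prime 2) := ⟨Nat.prime_two⟩
    obtain ⟨h, hord⟩ := exists_prime_orderOf_dvd_card' (G := H) 2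
      (by rw [hk]; exact dvd_pow_self 2 hkpos.ne')
    have hhH : h * h = 1 := by
      rw [← pow_two, ← hord]; exact pow_orderOf_eq_one h
    have hne1 : h ≠ 1 := by
      rintro rfl
      simp at hord
    have hhh : h.val * h.val = 1 := congrArg Subtype.val hhH
    obtain ⟨P, h0, h1, h22⟩ := exists_P h.val hhh
    have hshape := invol_shape (P * h.val * P⁻¹).val (P * h.val * P⁻¹).prop
      (by
        have : (P * h.val * P⁻¹) * (P * h.val * P⁻¹) = 1 := by
          calc _ = P * (h.val * h.val) * P⁻¹ := by group
            _ = 1 := by rw [hhh]; group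
        exact congrArg Subtype.val this)
      (by
        intro hx
        have hx : P * h.val * P⁻¹ = 1 := Subtype.ext hx
        apply hne1
        apply Subtype.ext
        exact conj_eq_one_iff.1 hx) h0 h1 h22
    set v := (P * h.val * P⁻¹).val 0 2 with hv
    set w := (P * h.val * P⁻¹).val 1 2 with hw
    let φ : Subgroup.centralizer (H : Set SL3) →* SL3 :=
      (MulAut.conj P).toMonoidHom.comp (Subgroup.subtype _)
    have hφ1 : ∀ g, φ g = P * g.val * P⁻¹ := fun g => rfl
    have hcomm : ∀ g : Subgroup.centralizer (H : Set SL3), ∀ x ∈ H, x * g.val = g.val * x :=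
      fun g => Subgroup.mem_centralizer_iff.1 g.prop
    have hφ : ∀ g, (φ g).val * !![-1, 0, v; 0, -1, w; 0, 0, 1] =
      !![-1, 0, v; 0, -1, w; 0, 0, 1] * (φ g).val := by
      intro g
      rw [← hshape]
      have : φ g * (P * h.val * P⁻¹) = (P * h.val * P⁻¹) * φ g := by
        rw [hφ1]
        calc _ = P * (g.val * h.val) * P⁻¹ := by group
          _ = P * (h.val * g.val) * P⁻¹ := by rw [hcomm g h.val h.prop]
          _ = _ := by group
      exact congrArg Subtype.val this
    let r := blkHom φ v w hφ
    have hrv : ∀ g, (r g).val = blk (φ g).val := fun g => rfl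
    have hr : Function.Injective r := by
      rw [injective_iff_map_eq_one]
      intro g hg
      have h3 : blk (φ g).val = 1 := by rw [← hrv, hg]; rfl
      have h4 := comm_blk_one _ (φ g).prop v w (hφ g) h3
      have h5 : φ g = 1 := Subtype.ext h4
      rw [hφ1] at h5
      exact Subtype.ext (conj_eq_one_iff.1 h5)
    by_cases hall : ∀ x : H, x = 1 ∨ x = h
    · refine acyc2 r hr ?_ i
      rintro u ⟨B, hB⟩
      obtain ⟨M, hM, hMb⟩ := exists_lift u B hB v w
      have hMh : M * (P * h.val * P⁻¹) = (P * h.val * P⁻¹) * M := by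
        apply Subtype.ext
        change M.val * (P * h.val * P⁻¹).val = (P * h.val * P⁻¹).val * M.val
        rw [hshape]; exact hM
      refine ⟨⟨P⁻¹ * M * P, ?_⟩, ?_⟩
      · rw [Subgroup.mem_centralizer_iff]
        intro x hx
        rcases hall ⟨x, hx⟩ with hx1 | hx1
        · rw [show x = 1 from congrArg Subtype.val hx1, one_mul, mul_one]
        · rw [show x = h.val from congrArg Subtype.val hx1]
          calc _ = P⁻¹ * ((P * h.val * P⁻¹) * M) * P := by group
            _ = P⁻¹ * (M * (P * h.val * P⁻¹)) * P := by rw [hMh]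
            _ = _ := by group
      · apply Units.ext
        rw [hrv, hφ1, ← hMb]
        congr 2
        change P * (P⁻¹ * M * P) * P⁻¹ = M
        group
    · push Not at hall
      obtain ⟨x, hx1, hx2⟩ := hall
      have hex : ∃ j, x ^ (2 ^ j) = 1 ∨ x ^ (2 ^ j) = h :=
        ⟨k, Or.inl (by rw [← hk]; exact pow_card_eq_one')⟩
      obtain ⟨u, hu1, hu2, hus⟩ : ∃ u : H, u ≠ 1 ∧ u ≠ h ∧ (u * u = 1 ∨ u * u = h) := by
        classical
        have hs := Nat.find_spec hex
        have hm := fun m => Nat.find_min hex (m := m)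
        rcases hj : Nat.find hex with _ | j
        · rw [hj] at hs
          simp at hs
          exact (hs.elim hx1 hx2).elim
        · have := hm j (by omega)
          push Not at this
          rw [hj, pow_succ, pow_mul, pow_two] at hs
          exact ⟨_, this.1, this.2, hs⟩
      have inK : ∀ y : H, y.val ∈ Subgroup.centralizer (H : Set SL3) := by
        intro y
        rw [Subgroup.mem_centralizer_iff]
        intro z hz
        exact congrArg Subtype.val (hab ⟨z, hz⟩ y)
      let uK : Subgroup.centralizer (H : Set SL3) := ⟨u.val, inK u⟩
      let hK : Subgroup.centralizer (H : Set SL3) := ⟨h.val, inK h⟩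
      have hrh : (r hK).val = -1 := by
        rw [hrv, hφ1]
        change blk (P * h.val * P⁻¹).val = -1
        rw [hshape]
        ext i j; fin_cases i <;> fin_cases j <;> simp [blk]
      have hfinK : Finite (Subgroup.centralizer (H : Set SL3)) := by
        have hB1 : (r uK).val ≠ 1 := by
          intro hh
          have : r uK = 1 := Units.ext hh
          rw [map_eq_one_iff r hr] at this
          have hval : u.val = 1 := congrArg Subtype.val this
          exact hu1 (Subtype.ext hval)
        have hB2 : (r uK).val ≠ -1 := by
          intro hh
          have : r uK = r hK := Units.ext (hh.trans hrh.symm)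
          have := hr this
          have hval : uK.val = hK.val := congrArg Subtype.val this
          exact hu2 (Subtype.ext hval)
        have hc : ∀ g, (r g).val * (r uK).val = (r uK).val * (r g).val := by
          intro g
          rw [← Units.val_mul, ← Units.val_mul, ← map_mul, ← map_mul]
          congr 2
          exact Subtype.ext (hcomm g u.val u.prop).symm
        rcases hus with hus | hus
        · refine finite_cent r hr (r uK).val hB1 hB2 1 (Or.inl rfl) ?_ hc
          rw [← Units.val_mul, ← map_mul]
          have : uK * uK = 1 := by
            apply Subtype.ext
            change u.val * u.val = 1
            exact congrArg Subtype.val hus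
          rw [this, map_one, one_smul]; rfl
        · refine finite_cent r hr (r uK).val hB1 hB2 (-1) (Or.inr rfl) ?_ hc
          rw [← Units.val_mul, ← map_mul]
          have : uK * uK = hK := by
            apply Subtype.ext
            change u.val * u.val = h.val
            exact congrArg Subtype.val hus
          rw [this, hrh, neg_smul, one_smul]
      exact isZero_finite i

end SolA

/-- For every finite abelian 2-subgroup `H` of `SL₃(ℤ)`, the centralizer `C(H)` is
rationally acyclic: `H⁰(C(H); ℚ) = ℚ` and `Hⁱ(C(H); ℚ) = 0` for `i > 0`. -/
theorem centralizer_rationally_acyclic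
    (H : Subgroup (Matrix.SpecialLinearGroup (Fin 3) ℤ))
    (hfin : Finite H) (hab : ∀ a b : H, a * b = b * a)
    (h2 : ∃ k : ℕ, Nat.card H = 2 ^ k) :
    Nonempty
      (groupCohomology
        (Rep.trivial ℚ
          (Subgroup.centralizer (H : Set (Matrix.SpecialLinearGroup (Fin 3) ℤ))) ℚ) 0 ≅
        ModuleCat.of ℚ ℚ) ∧
    ∀ i : ℕ, 0 < i →
      Limits.IsZero
        (groupCohomology
          (Rep.trivial ℚ
            (Subgroup.centralizer (H : Set (Matrix.SpecialLinearGroup (Fin 3) ℤ))) ℚ) i) := by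
  refine ⟨⟨groupCohomology.H0IsoOfIsTrivial _⟩, ?_⟩
  intro i hi
  obtain ⟨j, rfl⟩ : ∃ j, i = j + 1 := ⟨i - 1, by omega⟩
  exact SolA.acyc_main H hfin hab h2 j
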